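/- arXiv:2007.12111 — 3 statements merged into one kernel-verified Lean document; each statement's English description precedes it below -/
import Mathlib

section
/- Let r ≥ 2 and k_1,…,k_r ≥ 1 be integers, set k := max{k_1,…,k_r}, let 0 ≤ δ ≤ 1/(2(r+1)) be a real number, and let n be a positive integer such that (1 − (r+1)δ)·n ≥ Σ_{i=1}^{r}(k_i − 1) + k + 1 and k ≥ (1/(r+1) − δ)·n − 1. Then for all integers u_1,…,u_r with 0 ≤ u_i ≤ k_i − 1 for each i ∈ {1,…,r}, one has Σ_{i=1}^{r} C(2(k_i − 1) − 2u_i + 1, 2) − C(n − u_1 − ⋯ − u_r, 2) < −δ·C(n,2). -/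
/-- The binomial coefficient `C(m,2)` viewed as the quadratic polynomial
`m(m−1)/2` (evaluated at a real number `m`). -/
noncomputable def choose2 (m : ℝ) : ℝ := m * (m - 1) / 2

/-!
Put `xᵢ = kᵢ - 1 - uᵢ ∈ [0, A]` with `A = k - 1`, and `c = n - ∑ᵢ (kᵢ - 1)`, so that the quantity to
bound is `∑ᵢ C(2xᵢ + 1, 2) - C(c + ∑ᵢ xᵢ, 2)`. As `c` is large compared with `A`, replacing the
vector `x` by its largest entry `m` alone does not decrease this quantity. What remains,
`C(2m + 1, 2) - C(c + m, 2)`, is convex in `m`, so it suffices to check the endpoints `m = 0` and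
`m = A`.
-/

theorem choose2_two_mul_add_one (x : ℝ) : choose2 (2 * x + 1) = (2 * x + 1) * x := by
  unfold choose2
  ring

theorem mul_choose2 (a m : ℝ) : a * choose2 m = (a * m ^ 2 - a * m) / 2 := by
  unfold choose2
  ring

section Reduction

variable {ι : Type*} {t : Finset ι} {x : ι → ℝ} {c m A : ℝ}

theorem sum_choose2_two_mul_add_one_le (hx : ∀ i ∈ t, 0 ≤ x i) (hxm : ∀ i ∈ t, x i ≤ m) :
    ∑ i ∈ t, choose2 (2 * x i + 1) ≤ (2 * m + 1) * ∑ i ∈ t, x i := by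
  rw [Finset.mul_sum]
  refine Finset.sum_le_sum fun i hi => ?_
  rw [choose2_two_mul_add_one]
  exact mul_le_mul_of_nonneg_right (by linarith [hxm i hi]) (hx i hi)

theorem mul_sub_choose2_add_le {y : ℝ} (hmy : m ≤ y) (hmc : m + 3 / 2 ≤ c) :
    (2 * m + 1) * y - choose2 (c + y) ≤ choose2 (2 * m + 1) - choose2 (c + m) := by
  have hdiff : choose2 (c + y) - choose2 (c + m) - (2 * m + 1) * (y - m)
      = (y - m) * ((2 * c + y + m - 1) / 2 - (2 * m + 1)) := by
    unfold choose2
    ring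
  have hnonneg : 0 ≤ (y - m) * ((2 * c + y + m - 1) / 2 - (2 * m + 1)) :=
    mul_nonneg (by linarith) (by linarith)
  rw [choose2_two_mul_add_one]
  linarith

theorem convexOn_choose2_sub_choose2_add (c : ℝ) :
    ConvexOn ℝ Set.univ fun m => choose2 (2 * m + 1) - choose2 (c + m) := by
  have hquad : (fun m => choose2 (2 * m + 1) - choose2 (c + m))
      = fun m => (3 / 2 : ℝ) • m ^ 2 + ((3 / 2 - c) * m + -choose2 c) := by
    funext m
    simp only [choose2, smul_eq_mul]
    ring
  rw [hquad]
  have hsq : ConvexOn ℝ Set.univ fun m : ℝ => m ^ 2 := even_two.convexOn_pow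
  exact (hsq.smul (by norm_num)).add
    (((LinearMap.mulLeft ℝ (3 / 2 - c)).convexOn convex_univ).add_const _)

theorem sum_choose2_sub_choose2_add_sum_le_max (hx : ∀ i ∈ t, 0 ≤ x i) (hxA : ∀ i ∈ t, x i ≤ A)
    (hAc : A + 3 / 2 ≤ c) :
    ∑ i ∈ t, choose2 (2 * x i + 1) - choose2 (c + ∑ i ∈ t, x i)
      ≤ max (-choose2 c) (choose2 (2 * A + 1) - choose2 (c + A)) := by
  rcases t.eq_empty_or_nonempty with rfl | ht
  · simp
  have hzero : choose2 (2 * 0 + 1) = 0 := by rw [choose2_two_mul_add_one, mul_zero]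
  obtain ⟨j, hj, hmax⟩ := t.exists_max_image x ht
  calc ∑ i ∈ t, choose2 (2 * x i + 1) - choose2 (c + ∑ i ∈ t, x i)
      ≤ (2 * x j + 1) * ∑ i ∈ t, x i - choose2 (c + ∑ i ∈ t, x i) :=
        sub_le_sub_right (sum_choose2_two_mul_add_one_le hx hmax) _
    _ ≤ choose2 (2 * x j + 1) - choose2 (c + x j) :=
        mul_sub_choose2_add_le (Finset.single_le_sum hx hj) (by linarith [hxA j hj])
    _ ≤ max (choose2 (2 * 0 + 1) - choose2 (c + 0)) (choose2 (2 * A + 1) - choose2 (c + A)) :=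
        (convexOn_choose2_sub_choose2_add c).le_max_of_mem_Icc (Set.mem_univ 0) (Set.mem_univ A)
          ⟨hx j hj, hxA j hj⟩
    _ = max (-choose2 c) (choose2 (2 * A + 1) - choose2 (c + A)) := by
        rw [hzero, zero_sub, add_zero]

end Reduction

section Endpoints

variable {s δ n A c : ℝ}

theorem two_mul_le_sq_one_div_add (hs : 2 ≤ s) (hδ : 0 ≤ δ) :
    2 * δ ≤ (1 / s + (s - 1) * δ) ^ 2 := by
  have hs' : 1 / s ≤ 1 / 2 := one_div_le_one_div_of_le two_pos hs
  calc 2 * δ ≤ 4 * (1 - 1 / s) * δ := by gcongr; linarith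
    _ = 4 * (1 / s) * ((s - 1) * δ) := by field_simp
    _ ≤ (1 / s + (s - 1) * δ) ^ 2 := four_mul_le_sq_add _ _

theorem mul_choose2_lt_choose2 (hs : 2 ≤ s) (hδ : 0 ≤ δ) (hn : 0 ≤ n) (hc : 2 ≤ c)
    (hnc : (1 / s + (s - 1) * δ) * n ≤ c) :
    δ * choose2 n < choose2 c := by
  have hθ : 0 ≤ 1 / s + (s - 1) * δ :=
    add_nonneg (by positivity) (mul_nonneg (by linarith) hδ)
  have hsq : 2 * δ * n ^ 2 ≤ c ^ 2 :=
    calc 2 * δ * n ^ 2 ≤ (1 / s + (s - 1) * δ) ^ 2 * n ^ 2 := by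
          gcongr
          exact two_mul_le_sq_one_div_add hs hδ
      _ = ((1 / s + (s - 1) * δ) * n) ^ 2 := (mul_pow _ _ 2).symm
      _ ≤ c ^ 2 := by gcongr
  have hc_sq : c ^ 2 / 4 ≤ choose2 c := by
    unfold choose2
    nlinarith
  have hn_sq : δ * choose2 n = (δ * n ^ 2 - δ * n) / 2 := mul_choose2 δ n
  rcases (mul_nonneg hδ hn).eq_or_lt with hδn | hδn
  · have hδn_sq : δ * n ^ 2 = 0 := by rw [sq, ← mul_assoc, ← hδn, zero_mul]
    nlinarith
  · linarith

theorem choose2_add_mul_choose2_lt (hs : 1 ≤ s) (hδ : 0 ≤ δ) (hn : 0 ≤ n) (hA : 0 ≤ A)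
    (hc : A + 2 + s * δ * n ≤ c) (hnA : (1 / s - δ) * n ≤ A + 2) :
    choose2 (2 * A + 1) + δ * choose2 n < choose2 (c + A) := by
  have hδn : 0 ≤ δ * n := mul_nonneg hδ hn
  have hsδn : 0 ≤ s * δ * n := by positivity
  have hquad : δ * n ^ 2 ≤ s * δ * n * (A + 2 + s * δ * n) :=
    calc δ * n ^ 2 ≤ δ * n ^ 2 + (δ * n) ^ 2 * (s * (s - 1)) :=
          le_add_of_nonneg_right <|
            mul_nonneg (sq_nonneg _) (mul_nonneg (by linarith) (by linarith))
      _ = s * δ * n * ((1 / s - δ) * n + s * δ * n) := by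
          field_simp
          ring
      _ ≤ s * δ * n * (A + 2 + s * δ * n) := by gcongr
  have hprod : (1 + s * δ * n) * (A + 2 + s * δ * n) ≤ (c - A - 1) * (c + 3 * A) :=
    mul_le_mul (by linarith) (by linarith) (by linarith) (by linarith)
  have hfactor : choose2 (c + A) - choose2 (2 * A + 1) = (c - A - 1) * (c + 3 * A) / 2 := by
    unfold choose2
    ring
  have hn_sq : δ * choose2 n = (δ * n ^ 2 - δ * n) / 2 := mul_choose2 δ n
  linarith

end Endpoints

theorem optimization_claim_general {ι : Type*} [Fintype ι] [Nonempty ι] {k u : ι → ℝ}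
    {K δ n : ℝ} (hkK : ∀ i, k i ≤ K) (hδ : 0 ≤ δ) (hn : 0 ≤ n)
    (hcond : (∑ i, (k i - 1)) + K + 1 ≤ (1 - (Fintype.card ι + 1) * δ) * n)
    (hK : (1 / (Fintype.card ι + 1 : ℝ) - δ) * n - 1 ≤ K)
    (hu0 : ∀ i, 0 ≤ u i) (hu : ∀ i, u i ≤ k i - 1) :
    (∑ i, choose2 (2 * (k i - 1) - 2 * u i + 1)) - choose2 (n - ∑ i, u i)
      < -δ * choose2 n := by
  set s : ℝ := Fintype.card ι + 1
  have hs : 2 ≤ s := by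
    have hcard : (1 : ℝ) ≤ Fintype.card ι := by exact_mod_cast Fintype.card_pos (α := ι)
    linarith
  set c := n - ∑ i, (k i - 1) with hc_def
  have hA : 0 ≤ K - 1 := by
    let i := Classical.arbitrary ι
    linarith [hu0 i, hu i, hkK i]
  have hc : K - 1 + 2 + s * δ * n ≤ c := by linarith
  have hsδn : 0 ≤ s * δ * n := by positivity
  have hzero : δ * choose2 n < choose2 c :=
    mul_choose2_lt_choose2 hs hδ hn (by linarith) (by linarith)
  have htop : choose2 (2 * (K - 1) + 1) + δ * choose2 n < choose2 (c + (K - 1)) :=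
    choose2_add_mul_choose2_lt (by linarith) hδ hn hA hc (by linarith)
  have harg (i : ι) : 2 * (k i - 1) - 2 * u i + 1 = 2 * (k i - 1 - u i) + 1 := by ring
  have hrest : n - ∑ i, u i = c + ∑ i, (k i - 1 - u i) := by
    rw [Finset.sum_sub_distrib, hc_def]
    ring
  simp only [harg, hrest]
  refine (sum_choose2_sub_choose2_add_sum_le_max (A := K - 1) (fun i _ => by linarith [hu i])
    (fun i _ => by linarith [hkK i, hu0 i]) (by linarith)).trans_lt (max_lt ?_ ?_) <;> linarith

/-- **Claim (optimization step in the proof of the matching theorem).**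
Under the hypotheses of the Cockayne–Lorimer-type theorem, together with
`k ≥ (1/(r+1) − δ)·n − 1` where `k = max kᵢ`, for all integers `0 ≤ uᵢ ≤ kᵢ − 1`
one has `Σᵢ C(2(kᵢ−1) − 2uᵢ + 1, 2) − C(n − Σᵢ uᵢ, 2) < −δ·C(n,2)`. -/
theorem optimization_claim
    (r : ℕ) (hr : 2 ≤ r) (k : Fin r → ℕ) (hk : ∀ i, 1 ≤ k i)
    (δ : ℝ) (hδ0 : 0 ≤ δ) (hδ1 : δ ≤ 1 / (2 * (r + 1)))
    (n : ℕ) (hn : 1 ≤ n)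
    (hcond : (∑ i, ((k i : ℝ) - 1)) + ((Finset.univ.sup k : ℕ) : ℝ) + 1
      ≤ (1 - (r + 1) * δ) * n)
    (hkmax : (1 / (r + 1 : ℝ) - δ) * n - 1 ≤ ((Finset.univ.sup k : ℕ) : ℝ))
    (u : Fin r → ℕ) (hu : ∀ i, u i ≤ k i - 1) :
    (∑ i, choose2 (2 * ((k i : ℝ) - 1) - 2 * (u i : ℝ) + 1))
        - choose2 ((n : ℝ) - ∑ i, (u i : ℝ))
      < -δ * choose2 (n : ℝ) := by
  have : Nonempty (Fin r) := ⟨⟨0, by lia⟩⟩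
  have hkK (i : Fin r) : (k i : ℝ) ≤ (Finset.univ.sup k : ℕ) :=
    Nat.cast_le.2 (Finset.le_sup (Finset.mem_univ i))
  have hu_cast (i : Fin r) : (u i : ℝ) ≤ (k i : ℝ) - 1 := by
    rw [← Nat.cast_pred (hk i)]
    exact Nat.cast_le.2 (hu i)
  exact optimization_claim_general hkK hδ0 n.cast_nonneg
    (by rwa [Fintype.card_fin]) (by rwa [Fintype.card_fin]) (fun i => (u i).cast_nonneg) hu_cast
end

section
/- For every integer r ≥ 2 and every ε > 0 there exist a real γ = γ(r,ε) > 0, an integer K = K(r,ε), and an integer N such that the following holds. Let p ∈ (0,1], let G be a (γ,p)-pseudorandom graph on n ≥ N vertices, and let an r-colouring of the edges of G be given. Then there exist a colour i ∈ {1,…,r} and a path in G of length at least (2/(r+1) − ε)·n all but at most K of whose edges have colour i. -/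
/-- The number of edges of `G` with one endpoint in `U` and the other in `W`
(for disjoint `U`, `W`, each such edge corresponds to exactly one ordered pair). -/
noncomputable def edgesBetween {V : Type*} (G : SimpleGraph V) (U W : Set V) : ℕ :=
  {q : V × V | q.1 ∈ U ∧ q.2 ∈ W ∧ G.Adj q.1 q.2}.ncard

/-- A graph `G` on vertex set `V` is `(γ,p)`-pseudorandom if for every pair of
disjoint sets `U, W ⊆ V` with `|U|,|W| ≥ γ|V|` the density `d(U,W)` satisfies
`|d(U,W) − p| ≤ γp`. -/
def IsPseudorandom {V : Type*} [Fintype V] (G : SimpleGraph V) (γ p : ℝ) : Prop :=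
  ∀ U W : Set V, Disjoint U W →
    γ * (Fintype.card V : ℝ) ≤ (U.ncard : ℝ) → γ * (Fintype.card V : ℝ) ≤ (W.ncard : ℝ) →
    |(edgesBetween G U W : ℝ) / ((U.ncard : ℝ) * (W.ncard : ℝ)) - p| ≤ γ * p

/-!
Pass to a partition of the vertex set into boundedly many parts in which, for almost all pairs of
parts, every colour either has no edge at all between the two parts or has an edge between any two
of their large subsets (a *full* pair). Such a partition exists because each refinement along
witnesses of failure increases the number of edge-free triples (colour, vertex, vertex) by a
constant proportion. As `G` has no large bipartite hole, almost every pair of vertices lies in a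
pair of parts that is full in some colour.

By König's theorem, applied to the bipartite double cover of the graph of full pairs in colour `i`,
its largest matching is as large as its smallest vertex cover `W i : V → {0, 1, 2}`. The covers
satisfy `2 ≤ ∑ i, W i v + W j v` at almost every vertex `v`, for one suitable colour `j`; hence some
colour has a matching of size about `2 * n / (r + 1)`.

Depth-first search finds inside each full pair a long monochromatic path, using up the two sides at
the rate prescribed by the matching, and these boundedly many paths are joined into a single one by
edges of `G` of arbitrary colour, at the price of `O(γ * n)` vertices per join.
-/

section

open Finset
open scoped Classical Function

variable {V : Type*}

/-- `G` has no bipartite hole of size `s × t` between `A` and `B`. The two sides of a hole are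
required to be disjoint, so that the notion also makes sense when `A` and `B` overlap. -/
def NoBipartiteHole (G : SimpleGraph V) (s t : ℝ) (A B : Finset V) : Prop :=
  ∀ X ⊆ A, ∀ Y ⊆ B, Disjoint X Y → s ≤ #X → t ≤ #Y → ∃ x ∈ X, ∃ y ∈ Y, G.Adj x y

theorem NoBipartiteHole.mono {G : SimpleGraph V} {s s' t t' : ℝ} {A A' B B' : Finset V}
    (h : NoBipartiteHole G s t A B) (hs : s ≤ s') (ht : t ≤ t') (hA : A' ⊆ A) (hB : B' ⊆ B) :
    NoBipartiteHole G s' t' A' B' := fun X hX Y hY hXY hsX htY =>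
  h X (hX.trans hA) Y (hY.trans hB) hXY (hs.trans hsX) (ht.trans htY)

theorem NoBipartiteHole.symm {G : SimpleGraph V} {s t : ℝ} {A B : Finset V}
    (h : NoBipartiteHole G s t A B) : NoBipartiteHole G t s B A := by
  intro X hX Y hY hXY hsX htY
  obtain ⟨y, hy, x, hx, hadj⟩ := h Y hY X hX hXY.symm htY hsX
  exact ⟨x, hx, y, hy, hadj.symm⟩

/-! ### Depth-first search -/

/- Depth-first search: `S` holds the abandoned vertices, `l` the current path, `U` the unexplored
vertices. Every step lowers `card U - card S` by exactly one. -/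
theorem exists_isChain_add_separated_of_card_eq_add (G : SimpleGraph V) (d : ℕ) :
    ∀ (S : Multiset V) (l : List V) (U : Multiset V), l.IsChain G.Adj →
      (∀ x ∈ S, ∀ y ∈ U, ¬ G.Adj x y) → U.card = S.card + d →
      ∃ (S' : Multiset V) (l' : List V) (U' : Multiset V), l'.IsChain G.Adj ∧
        (∀ x ∈ S', ∀ y ∈ U', ¬ G.Adj x y) ∧ S'.card = U'.card ∧ S' + ↑l' + U' = S + ↑l + U := by
  induction d with
  | zero => exact fun S l U hl hSU hd => ⟨S, l, U, hl, hSU, hd.symm, rfl⟩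
  | succ d ih =>
    intro S l U hl hSU hd
    have push : ∀ u ∈ U, (u :: l).IsChain G.Adj → ∃ (S' : Multiset V) (l' : List V)
        (U' : Multiset V), l'.IsChain G.Adj ∧ (∀ x ∈ S', ∀ y ∈ U', ¬ G.Adj x y) ∧
        S'.card = U'.card ∧ S' + ↑l' + U' = S + ↑l + U := by
      intro u hu hul
      obtain ⟨U, rfl⟩ := Multiset.exists_cons_of_mem hu
      obtain ⟨S', l', U', hl', hSU', hcard, hsum⟩ := ih S (u :: l) U hul
        (fun x hx y hy => hSU x hx y (Multiset.mem_cons_of_mem hy))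
        (by rw [Multiset.card_cons] at hd; omega)
      exact ⟨S', l', U', hl', hSU', hcard, by simp [hsum, ← Multiset.cons_coe]⟩
    cases l with
    | nil =>
      obtain ⟨u, hu⟩ := Multiset.card_pos_iff_exists_mem.1 (show 0 < U.card by omega)
      exact push u hu (.singleton u)
    | cons h l =>
      by_cases hU : ∃ u ∈ U, G.Adj u h
      · obtain ⟨u, hu, hadj⟩ := hU
        exact push u hu (.cons_cons hadj hl)
      · push Not at hU
        obtain ⟨S', l', U', hl', hSU', hcard, hsum⟩ := ih (h ::ₘ S) l U hl.tail
          (by simpa [G.adj_comm h] using ⟨hU, hSU⟩) (by rw [Multiset.card_cons]; omega)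
        exact ⟨S', l', U', hl', hSU', hcard, by simp [hsum, ← Multiset.cons_coe]⟩

theorem exists_isChain_add_separated (G : SimpleGraph V) (C : Finset V) :
    ∃ (S : Finset V) (l : List V) (U : Finset V), l.IsChain G.Adj ∧
      (∀ x ∈ S, ∀ y ∈ U, ¬ G.Adj x y) ∧ #S = #U ∧ S.val + ↑l + U.val = C.val := by
  obtain ⟨S, l, U, hl, hSU, hcard, hsum⟩ :=
    exists_isChain_add_separated_of_card_eq_add G #C 0 [] C.val .nil (by simp) (by simp)
  rw [Multiset.coe_nil, add_zero, zero_add] at hsum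
  have hnodup : (S + ↑l + U).Nodup := hsum ▸ C.nodup
  exact ⟨⟨S, (Multiset.nodup_add.1 (Multiset.nodup_add.1 hnodup).1).1⟩, l,
    ⟨U, (Multiset.nodup_add.1 hnodup).2.1⟩, hl, hSU, hcard, hsum⟩

theorem two_mul_countP_mem_le {G : SimpleGraph V} {A : Finset V} (hA : G.IsIndepSet A) :
    ∀ {l : List V}, l.IsChain G.Adj → 2 * l.countP (· ∈ A) ≤ l.length + 1
  | [], _ => by simp
  | [x], _ => by grind
  | x :: y :: l, hl => by
    have ih := two_mul_countP_mem_le hA hl.tail.tail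
    have hxy : ¬ (x ∈ A ∧ y ∈ A) := fun h => hA h.1 h.2 hl.rel.ne hl.rel
    grind

theorem card_le_card_sdiff_add_countP (A : Finset V) (l : List V) :
    #A ≤ #(A \ l.toFinset) + l.countP (· ∈ A) := by
  have hinter : #(A ∩ l.toFinset) ≤ l.countP (· ∈ A) := by
    rw [List.countP_eq_length_filter]
    refine (card_le_card fun x hx => ?_).trans (List.toFinset_card_le _)
    simpa [and_comm] using hx
  have := card_sdiff_add_card_inter A l.toFinset
  omega

theorem card_eq_card_inter_add_countP_add_card_inter {A C S U : Finset V} {l : List V}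
    (hsum : S.val + ↑l + U.val = C.val) (hA : A ⊆ C) :
    #A = #(S ∩ A) + l.countP (· ∈ A) + #(U ∩ A) := by
  have hcount (X : Finset V) : X.val.countP (· ∈ A) = #(X ∩ A) := by
    rw [Multiset.countP_eq_card_filter, ← filter_val, filter_mem_eq_inter, card_val]
  have := congrArg (Multiset.countP (· ∈ A)) hsum
  rwa [Multiset.countP_add, Multiset.countP_add, Multiset.coe_countP, hcount, hcount, hcount,
    inter_eq_right.2 hA, eq_comm] at this

theorem card_inter_add_card_inter {A B S : Finset V} (hAB : Disjoint A B) (hS : S ⊆ A ∪ B) :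
    #(S ∩ A) + #(S ∩ B) = #S := by
  rw [← card_union_of_disjoint (hAB.mono inter_subset_right inter_subset_right),
    ← inter_union_distrib_left, inter_eq_left.2 hS]

theorem isIndepSet_of_isBipartiteWith {G : SimpleGraph V} {A B : Set V}
    (h : G.IsBipartiteWith A B) : G.IsIndepSet A := fun _ hx _ hy _ hadj =>
  Set.disjoint_left.1 h.disjoint hy (h.mem_of_mem_adj hx hadj)

theorem lt_card_inter_or_lt_card_inter {H : SimpleGraph V} {A B S U : Finset V}
    (hAB : Disjoint A B) {s t : ℝ} (hH : NoBipartiteHole H s t A B)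
    (hSU : ∀ x ∈ S, ∀ y ∈ U, ¬ (H.between A B).Adj x y) :
    #(S ∩ A) < s ∨ #(U ∩ B) < t := by
  by_contra! hlarge
  obtain ⟨x, hx, y, hy, hxy⟩ := hH (S ∩ A) inter_subset_right (U ∩ B) inter_subset_right
    (hAB.mono inter_subset_right inter_subset_right) hlarge.1 hlarge.2
  rw [mem_inter] at hx hy
  exact hSU x hx.1 y hy.1 ⟨hxy, .inl ⟨hx.2, hy.2⟩⟩

theorem two_mul_lt_length_of_separated {H : SimpleGraph V} {A B S U : Finset V} {l : List V}
    (hAB : Disjoint A B) {s t : ℝ} (hH : NoBipartiteHole H s t A B) {q : ℕ}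
    (hA : q + 2 * s ≤ #A) (hB : q + 2 * t ≤ #B) (hl : l.IsChain (H.between A B).Adj)
    (hSU : ∀ x ∈ S, ∀ y ∈ U, ¬ (H.between A B).Adj x y) (hcard : #S = #U)
    (hsum : S.val + ↑l + U.val = (A ∪ B).val) : 2 * q < l.length := by
  have hbip := H.between_isBipartiteWith (disjoint_coe.2 hAB)
  have hlA := two_mul_countP_mem_le (isIndepSet_of_isBipartiteWith hbip) hl
  have hlB := two_mul_countP_mem_le (isIndepSet_of_isBipartiteWith hbip.symm) hl
  have hAsum := card_eq_card_inter_add_countP_add_card_inter hsum subset_union_left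
  have hBsum := card_eq_card_inter_add_countP_add_card_inter hsum subset_union_right
  have hS := card_inter_add_card_inter hAB (S := S) <| val_le_iff.1 <| by
    rw [← hsum, add_assoc]; exact Multiset.le_add_right _ _
  have hU := card_inter_add_card_inter hAB (S := U) <| val_le_iff.1 <| by
    rw [← hsum]; exact Multiset.le_add_left _ _
  have hlen : #S + l.length + #U = #A + #B := by
    rw [← card_union_of_disjoint hAB, ← card_val (A ∪ B), ← hsum]
    simp
  have hSAUB := lt_card_inter_or_lt_card_inter hAB hH hSU
  have hUASB := lt_card_inter_or_lt_card_inter hAB hH fun x hx y hy h => hSU y hy x hx h.symm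
  have hlong : (2 * q : ℝ) < l.length ∨ q < l.countP (· ∈ A) ∨ q < l.countP (· ∈ B) := by
    rify at hAsum hBsum hS hU hlen hcard ⊢
    rcases hSAUB with hSA | hUB <;> rcases hUASB with hUA | hSB
    · exact .inr (.inl (by linarith))
    · exact .inl (by linarith)
    · exact .inl (by linarith)
    · exact .inr (.inr (by linarith))
  rcases hlong with hlt | hlt | hlt
  · exact_mod_cast hlt
  all_goals omega

theorem exists_isChain_of_noBipartiteHole {H : SimpleGraph V} {A B : Finset V}
    (hAB : Disjoint A B) {s t : ℝ} (hH : NoBipartiteHole H s t A B) {q : ℕ}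
    (hA : q + 2 * s ≤ #A) (hB : q + 2 * t ≤ #B) :
    ∃ l : List V, l.IsChain H.Adj ∧ l.Nodup ∧ l.length = 2 * q ∧ (∀ x ∈ l, x ∈ A ∪ B) ∧
      l.countP (· ∈ A) ≤ q ∧ l.countP (· ∈ B) ≤ q := by
  obtain ⟨S, l, U, hl, hSU, hcard, hsum⟩ := exists_isChain_add_separated (H.between A B) (A ∪ B)
  have hlen := two_mul_lt_length_of_separated hAB hH hA hB hl hSU hcard hsum
  have hle : (l : Multiset V) ≤ (A ∪ B).val :=
    hsum ▸ (Multiset.le_add_left _ _).trans (Multiset.le_add_right _ _)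
  have hbip := H.between_isBipartiteWith (disjoint_coe.2 hAB)
  have htake := hl.take (2 * q)
  have htakelen : (l.take (2 * q)).length = 2 * q := List.length_take_of_le hlen.le
  have htakeA := two_mul_countP_mem_le (isIndepSet_of_isBipartiteWith hbip) htake
  have htakeB := two_mul_countP_mem_le (isIndepSet_of_isBipartiteWith hbip.symm) htake
  refine ⟨l.take (2 * q), htake.imp fun _ _ h => h.1, ?_, htakelen, fun x hx => ?_, by omega,
    by omega⟩
  · exact (Multiset.coe_nodup.1 (Multiset.nodup_of_le hle (A ∪ B).nodup)).sublist
      (List.take_sublist _ _)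
  · exact Multiset.mem_of_le hle (Multiset.mem_coe.2 (List.mem_of_mem_take hx))

/-! ### Joining paths -/

/-- The number of consecutive pairs of `l` that are not edges of `H`. For the support of a walk this
is the number of edges of the walk outside `H`. -/
noncomputable def defect (H : SimpleGraph V) (l : List V) : ℕ :=
  (l.zipWith (s(·, ·)) l.tail).countP (· ∉ H.edgeSet)

theorem defect_cons_cons (H : SimpleGraph V) (x y : V) (l : List V) :
    defect H (x :: y :: l) = defect H (y :: l) + if H.Adj x y then 0 else 1 := by
  simp [defect, List.countP_cons]

theorem defect_eq_zero_of_isChain {H : SimpleGraph V} : ∀ {l : List V},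
    l.IsChain H.Adj → defect H l = 0
  | [], _ => rfl
  | [_], _ => rfl
  | x :: y :: l, hl => by
    rw [defect_cons_cons, defect_eq_zero_of_isChain hl.of_cons, if_pos hl.rel]

theorem defect_append_le (H : SimpleGraph V) : ∀ l₁ l₂ : List V,
    defect H (l₁ ++ l₂) ≤ defect H l₁ + defect H l₂ + 1
  | [], l₂ => by simp [defect]
  | [x], [] => by simp [defect]
  | [x], y :: l₂ => by
    grind [defect_cons_cons, defect]
  | x :: y :: l₁, l₂ => by
    have := defect_append_le H (y :: l₁) l₂
    simp only [List.cons_append, defect_cons_cons] at this ⊢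
    omega

theorem defect_le_defect_append_left (H : SimpleGraph V) : ∀ l₁ l₂ : List V,
    defect H l₁ ≤ defect H (l₁ ++ l₂)
  | [], l₂ => by simp [defect]
  | [x], l₂ => by simp [defect]
  | x :: y :: l₁, l₂ => by
    have := defect_le_defect_append_left H (y :: l₁) l₂
    simp only [List.cons_append, defect_cons_cons] at this ⊢
    omega

theorem defect_le_defect_append_right (H : SimpleGraph V) (l₂ : List V) : ∀ l₁ : List V,
    defect H l₂ ≤ defect H (l₁ ++ l₂)
  | [] => le_rfl
  | [x] => by
    cases l₂ with
    | nil => simp [defect]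
    | cons y l₂ => simp [defect_cons_cons]
  | x :: y :: l₁ => by
    have := defect_le_defect_append_right H l₂ (y :: l₁)
    simp only [List.cons_append, defect_cons_cons] at this ⊢
    omega

theorem countP_mem_le_ite {α : Type*} {A : α → Finset V} (hA : Pairwise (Disjoint on A))
    {B : Finset V} (hAB : ∀ a, Disjoint (A a) B) {l : List V} {a₀ : α}
    (hl : ∀ x ∈ l, x ∈ A a₀ ∪ B) {q : ℕ} (hq : l.countP (· ∈ A a₀) ≤ q) (a : α) :
    l.countP (· ∈ A a) ≤ if a₀ = a then q else 0 := by
  split_ifs with h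
  · exact h ▸ hq
  · have hdisj : Disjoint (A a) (A a₀ ∪ B) := disjoint_union_right.2 ⟨hA (Ne.symm h), hAB a⟩
    simpa using fun x hx hxa => disjoint_left.1 hdisj hxa (hl x hx)

section Join

variable [Fintype V] {G : SimpleGraph V} {g : ℕ}

theorem exists_adj_near_ends (hG : NoBipartiteHole G g g univ univ) {l₁ l₂ : List V}
    (hnodup : (l₁ ++ l₂).Nodup) (hl₁ : g ≤ l₁.length) (hl₂ : g ≤ l₂.length) :
    ∃ p₁ x s₁ p₂ y s₂, l₁ = (p₁ ++ [x]) ++ s₁ ∧ l₂ = p₂ ++ y :: s₂ ∧ G.Adj x y ∧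
      s₁.length < g ∧ p₂.length < g := by
  obtain ⟨a₁, b₁, rfl, hb₁⟩ : ∃ a b, l₁ = a ++ b ∧ b.length = g :=
    ⟨_, _, (List.take_append_drop (l₁.length - g) l₁).symm, by grind⟩
  obtain ⟨b₂, a₂, rfl, hb₂⟩ : ∃ b a, l₂ = b ++ a ∧ b.length = g :=
    ⟨_, _, (List.take_append_drop g l₂).symm, by grind⟩
  have hb : (b₁ ++ b₂).Nodup := hnodup.sublist
    ((List.sublist_append_right _ _).append (List.sublist_append_left _ _))
  obtain ⟨hn₁, hn₂, hdisj⟩ := List.nodup_append'.1 hb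
  obtain ⟨x, hx, y, hy, hxy⟩ := hG b₁.toFinset (subset_univ _) b₂.toFinset (subset_univ _)
    (List.disjoint_toFinset_iff_disjoint.2 hdisj)
    (by rw [List.toFinset_card_of_nodup hn₁, hb₁]) (by rw [List.toFinset_card_of_nodup hn₂, hb₂])
  obtain ⟨p₁, s₁, rfl⟩ := List.append_of_mem (List.mem_toFinset.1 hx)
  obtain ⟨p₂, s₂, rfl⟩ := List.append_of_mem (List.mem_toFinset.1 hy)
  refine ⟨a₁ ++ p₁, x, s₁, p₂, y, s₂ ++ a₂, by simp, by simp, hxy, ?_, ?_⟩ <;>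
  · simp only [List.length_append, List.length_cons] at hb₁ hb₂
    omega

/- If either list is shorter than `g`, it is dropped; otherwise an edge between the last `g`
vertices of `l₁` and the first `g` vertices of `l₂` joins them. -/
theorem exists_isChain_sublist_append (hG : NoBipartiteHole G g g univ univ) (H : SimpleGraph V)
    {l₁ l₂ : List V} (hl₁ : l₁.IsChain G.Adj) (hl₂ : l₂.IsChain G.Adj)
    (hnodup : (l₁ ++ l₂).Nodup) :
    ∃ l : List V, l.Sublist (l₁ ++ l₂) ∧ l.IsChain G.Adj ∧
      defect H l ≤ defect H l₁ + defect H l₂ + 1 ∧ l₁.length + l₂.length ≤ l.length + 2 * g := by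
  rcases lt_or_ge l₁.length g with hlt | hge₁
  · exact ⟨l₂, List.sublist_append_right _ _, hl₂, by omega, by omega⟩
  rcases lt_or_ge l₂.length g with hlt | hge₂
  · exact ⟨l₁, List.sublist_append_left _ _, hl₁, by omega, by omega⟩
  obtain ⟨p₁, x, s₁, p₂, y, s₂, rfl, rfl, hxy, hs₁, hp₂⟩ :=
    exists_adj_near_ends hG hnodup hge₁ hge₂
  refine ⟨(p₁ ++ [x]) ++ y :: s₂, ?_, ?_, ?_, ?_⟩
  · exact (List.sublist_append_left _ _).append (List.sublist_append_right _ _)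
  · exact hl₁.left_of_append.append hl₂.right_of_append (by simpa using hxy)
  · have := defect_append_le H (p₁ ++ [x]) (y :: s₂)
    have := defect_le_defect_append_left H (p₁ ++ [x]) s₁
    have := defect_le_defect_append_right H (y :: s₂) p₂
    omega
  · simp only [List.length_append, List.length_cons, List.length_nil] at *
    omega

theorem exists_isChain_extension (hG : NoBipartiteHole G g g univ univ) {H : SimpleGraph V}
    (hHG : H ≤ G) {A B : Finset V} (hAB : Disjoint A B) {s t : ℝ}
    (hH : NoBipartiteHole H s t A B) {Q : List V} (hQ : Q.IsChain G.Adj) (hnodup : Q.Nodup) {q : ℕ}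
    (hA : Q.countP (· ∈ A) + q + 2 * s ≤ #A) (hB : Q.countP (· ∈ B) + q + 2 * t ≤ #B) :
    ∃ l Q' : List V, Q'.Sublist (Q ++ l) ∧ Q'.IsChain G.Adj ∧ Q'.Nodup ∧
      defect H Q' ≤ defect H Q + 1 ∧ Q.length + 2 * q ≤ Q'.length + 2 * g ∧
      (∀ x ∈ l, x ∈ A ∪ B) ∧ l.countP (· ∈ A) ≤ q ∧ l.countP (· ∈ B) ≤ q := by
  have hA' : (#A : ℝ) ≤ #(A \ Q.toFinset) + Q.countP (· ∈ A) :=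
    mod_cast card_le_card_sdiff_add_countP A Q
  have hB' : (#B : ℝ) ≤ #(B \ Q.toFinset) + Q.countP (· ∈ B) :=
    mod_cast card_le_card_sdiff_add_countP B Q
  obtain ⟨l, hl, hlnodup, hlen, hlAB, hlA, hlB⟩ :=
    exists_isChain_of_noBipartiteHole (hAB.mono sdiff_subset sdiff_subset)
      (hH.mono le_rfl le_rfl sdiff_subset sdiff_subset) (q := q)
      (show q + 2 * s ≤ #(A \ Q.toFinset) by linarith)
      (show q + 2 * t ≤ #(B \ Q.toFinset) by linarith)
  have hlQ : ∀ x ∈ l, x ∈ A ∪ B ∧ x ∉ Q := by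
    intro x hx
    have := hlAB x hx
    rw [← union_sdiff_distrib, mem_sdiff, List.mem_toFinset] at this
    exact this
  have hdisj : (Q ++ l).Nodup :=
    List.nodup_append'.2 ⟨hnodup, hlnodup, fun x hxQ hxl => (hlQ x hxl).2 hxQ⟩
  obtain ⟨Q', hsub, hQ', hdefect, hQ'len⟩ :=
    exists_isChain_sublist_append hG H hQ (hl.imp fun _ _ h => hHG h) hdisj
  have hcount (X : Finset V) : l.countP (· ∈ X) ≤ l.countP (· ∈ X \ Q.toFinset) :=
    List.countP_mono_left fun x hx hxX => by simpa [(hlQ x hx).2] using hxX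
  refine ⟨l, Q', hsub, hQ', hdisj.sublist hsub, ?_, by omega, fun x hx => (hlQ x hx).1,
    (hcount A).trans hlA, (hcount B).trans hlB⟩
  rwa [defect_eq_zero_of_isChain hl, add_zero] at hdefect

variable {α β : Type*}

/- The paths for the pairs in `F` are found one after the other, each one avoiding the path `Q`
built so far, and each one is joined to `Q` straight away. -/
theorem exists_isChain_of_pairs (hG : NoBipartiteHole G g g univ univ) {H : SimpleGraph V}
    (hHG : H ≤ G) {A : α → Finset V} {B : β → Finset V} (hA : Pairwise (Disjoint on A))
    (hB : Pairwise (Disjoint on B)) (hAB : ∀ a b, Disjoint (A a) (B b)) {s : α → ℝ} {t : β → ℝ}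
    (q : α × β → ℕ) (F : Finset (α × β))
    (hH : ∀ p ∈ F, NoBipartiteHole H (s p.1) (t p.2) (A p.1) (B p.2))
    (hqA : ∀ p ∈ F, (∑ p' ∈ F with p'.1 = p.1, q p' : ℕ) + 2 * s p.1 ≤ #(A p.1))
    (hqB : ∀ p ∈ F, (∑ p' ∈ F with p'.2 = p.2, q p' : ℕ) + 2 * t p.2 ≤ #(B p.2)) :
    ∃ Q : List V, Q.IsChain G.Adj ∧ Q.Nodup ∧ defect H Q ≤ #F ∧
      2 * ∑ p ∈ F, q p ≤ Q.length + 2 * g * #F ∧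
      (∀ a, Q.countP (· ∈ A a) ≤ ∑ p ∈ F with p.1 = a, q p) ∧
      (∀ b, Q.countP (· ∈ B b) ≤ ∑ p ∈ F with p.2 = b, q p) := by
  induction F using Finset.induction_on with
  | empty => exact ⟨[], by simp [defect]⟩
  | insert p F hp ih =>
    have hinsert (P : α × β → Prop) : ∑ p' ∈ insert p F with P p', q p' =
        (if P p then q p else 0) + ∑ p' ∈ F with P p', q p' := by
      rw [sum_filter, sum_insert hp, ← sum_filter]
    have hmono (P : α × β → Prop) :
        ((∑ p' ∈ F with P p', q p' : ℕ) : ℝ) ≤ (∑ p' ∈ insert p F with P p', q p' : ℕ) :=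
      mod_cast (hinsert P).ge.trans' (Nat.le_add_left _ _)
    obtain ⟨Q, hQ, hnodup, hdefect, hlen, hQA, hQB⟩ := ih
      (fun p' hp' => hH p' (mem_insert_of_mem hp'))
      (fun p' hp' => by linarith [hqA p' (mem_insert_of_mem hp'), hmono (·.1 = p'.1)])
      (fun p' hp' => by linarith [hqB p' (mem_insert_of_mem hp'), hmono (·.2 = p'.2)])
    have hpA := hqA p (mem_insert_self p F)
    have hpB := hqB p (mem_insert_self p F)
    rw [hinsert, if_pos rfl, Nat.cast_add] at hpA hpB
    have hQA' : (Q.countP (· ∈ A p.1) : ℝ) ≤ (∑ p' ∈ F with p'.1 = p.1, q p' : ℕ) :=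
      mod_cast hQA p.1
    have hQB' : (Q.countP (· ∈ B p.2) : ℝ) ≤ (∑ p' ∈ F with p'.2 = p.2, q p' : ℕ) :=
      mod_cast hQB p.2
    obtain ⟨l, Q', hsub, hQ', hnodup', hdefect', hlen', hl, hlA, hlB⟩ :=
      exists_isChain_extension hG hHG (hAB p.1 p.2) (hH p (mem_insert_self p F)) hQ hnodup
        (q := q p) (by linarith) (by linarith)
    have hcount (X : Finset V) : Q'.countP (· ∈ X) ≤ Q.countP (· ∈ X) + l.countP (· ∈ X) :=
      hsub.countP_le.trans_eq List.countP_append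
    refine ⟨Q', hQ', hnodup', ?_, ?_, fun a => ?_, fun b => ?_⟩
    · rw [card_insert_of_notMem hp]; omega
    · rw [card_insert_of_notMem hp, sum_insert hp]; linarith
    · rw [hinsert]
      linarith [hcount (A a), hQA a, countP_mem_le_ite hA (fun a => hAB a p.2) hl hlA a]
    · rw [hinsert]
      have hl' : ∀ x ∈ l, x ∈ B p.2 ∪ A p.1 := by simpa only [union_comm] using hl
      linarith [hcount (B b), hQB b, countP_mem_le_ite hB (fun b => (hAB p.1 b).symm) hl' hlB b]

end Join

/-! ### Matchings and covers -/

section Cover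

variable {ι α : Type*} [Fintype ι]

/- Hall's theorem, applied after adding the same `d` new elements to every `t u`. -/
theorem exists_matching_of_card_le_card_biUnion_add (t : ι → Finset α) (d : ℕ)
    (hd : ∀ Y : Finset ι, #Y ≤ #(Y.biUnion t) + d) :
    ∃ M : Finset (ι × α), Set.InjOn Prod.fst (M : Set (ι × α)) ∧
      Set.InjOn Prod.snd (M : Set (ι × α)) ∧ (∀ e ∈ M, e.2 ∈ t e.1) ∧ Fintype.card ι ≤ #M + d := by
  obtain ⟨f, hf_inj, hf⟩ := (all_card_le_biUnion_card_iff_exists_injective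
      fun u => (t u).disjSum (univ : Finset (Fin d))).1 fun Y => by
    obtain rfl | ⟨u, hu⟩ := Y.eq_empty_or_nonempty
    · simp
    have hsub : (Y.biUnion t).disjSum (univ : Finset (Fin d)) ⊆
        Y.biUnion fun u => (t u).disjSum univ := by
      rintro (a | i) h
      · simpa using h
      · exact mem_biUnion.2 ⟨u, hu, inr_mem_disjSum.2 (mem_univ i)⟩
    calc #Y ≤ #(Y.biUnion t) + d := hd Y
      _ = #((Y.biUnion t).disjSum (univ : Finset (Fin d))) := by simp [card_disjSum]
      _ ≤ _ := card_le_card hsub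
  set M : Finset (ι × α) := {e ∈ univ ×ˢ univ.biUnion t | f e.1 = .inl e.2} with hM
  have hmem {u a} : (u, a) ∈ M ↔ f u = .inl a := by
    simp only [hM, mem_filter, mem_product, mem_univ, true_and, mem_biUnion, and_iff_right_iff_imp]
    exact fun h => ⟨u, inl_mem_disjSum.1 (h ▸ hf u)⟩
  refine ⟨M, ?_, ?_, fun ⟨u, a⟩ h => inl_mem_disjSum.1 (hmem.1 h ▸ hf u), ?_⟩
  · rintro ⟨u, a⟩ h ⟨u', a'⟩ h' rfl
    simpa using (hmem.1 h).symm.trans (hmem.1 h')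
  · rintro ⟨u, a⟩ h ⟨u', a'⟩ h' rfl
    simpa using hf_inj ((hmem.1 h).trans (hmem.1 h').symm)
  · calc Fintype.card ι ≤ #((M.image Prod.snd).disjSum (univ : Finset (Fin d))) := by
          refine card_le_card_of_injOn f (fun u _ => ?_) hf_inj.injOn
          cases h : f u with
          | inl a => exact inl_mem_disjSum.2 (mem_image_of_mem Prod.snd (hmem.2 h))
          | inr i => simp
      _ ≤ #M + d := by simpa [card_disjSum] using card_image_le

theorem exists_matching_card_add_card_biUnion_le (t : ι → Finset α) :
    ∃ M : Finset (ι × α), Set.InjOn Prod.fst (M : Set (ι × α)) ∧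
      Set.InjOn Prod.snd (M : Set (ι × α)) ∧ (∀ e ∈ M, e.2 ∈ t e.1) ∧
      ∃ X : Finset ι, Fintype.card ι + #(X.biUnion t) ≤ #M + #X := by
  obtain ⟨X, -, hX⟩ := exists_max_image (univ : Finset (Finset ι))
    (fun X => (#X - #(X.biUnion t) : ℤ)) ⟨∅, mem_univ _⟩
  have hpos : (0 : ℤ) ≤ #X - #(X.biUnion t) := by simpa using hX ∅ (mem_univ _)
  obtain ⟨M, hfst, hsnd, hMt, hcard⟩ := exists_matching_of_card_le_card_biUnion_add t
    (#X - #(X.biUnion t)) fun Y => by have := hX Y (mem_univ _); omega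
  exact ⟨M, hfst, hsnd, hMt, X, by omega⟩

/- König's theorem for the bipartite double cover of `R`: the cover found there consists of the left
copies of the vertices outside `X` and the right copies of the neighbours of `X`. -/
theorem exists_matching_and_cover [Fintype V] {R : V → V → Prop} (hR : ∀ u v, R u v → R v u) :
    ∃ M : Finset (V × V), Set.InjOn Prod.fst (M : Set (V × V)) ∧
      Set.InjOn Prod.snd (M : Set (V × V)) ∧ (∀ e ∈ M, R e.1 e.2) ∧
      ∃ W : V → ℕ, (∀ u v, R u v → 2 ≤ W u + W v) ∧ ∑ v, W v ≤ #M := by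
  obtain ⟨M, hfst, hsnd, hMR, X, hX⟩ :=
    exists_matching_card_add_card_biUnion_le fun u => ({v | R u v} : Finset V)
  set N := X.biUnion fun u => ({v | R u v} : Finset V) with hN
  have hadj {u v} (huv : R u v) (hu : u ∈ X) : v ∈ N := by simpa [hN] using ⟨u, hu, huv⟩
  refine ⟨M, hfst, hsnd, by simpa using hMR,
    fun v => (if v ∈ Xᶜ then 1 else 0) + if v ∈ N then 1 else 0, fun u v huv => ?_, ?_⟩
  · have hv := hadj huv
    have hu := hadj (hR u v huv)
    clear_value N
    grind [mem_compl]
  · have := card_add_card_compl X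
    simp only [sum_add_distrib, sum_boole, filter_univ_mem, Nat.cast_id]
    omega

theorem card_filter_lt_card_filter_le [Fintype V] {Z : V → V → Prop} {σ : ℝ} (hσ : 0 < σ)
    (hZ : #{z : V × V | Z z.1 z.2} ≤ σ ^ 2 * (Fintype.card V : ℝ) ^ 2) :
    #{u | σ * Fintype.card V < #{v | Z u v}} ≤ σ * Fintype.card V := by
  set n := Fintype.card V
  obtain hn | hn := (Nat.cast_nonneg (α := ℝ) n).eq_or_lt
  · have : IsEmpty V := Fintype.card_eq_zero_iff.1 (by exact_mod_cast hn.symm)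
    simp [← hn]
  set B : Finset V := {u | σ * n < #{v | Z u v}}
  have hsum : #{z : V × V | Z z.1 z.2} = ∑ u, #{v | Z u v} := by
    simp_rw [card_filter, Fintype.sum_prod_type]
  refine le_of_mul_le_mul_right ?_ (mul_pos hσ hn)
  calc #B * (σ * n) = ∑ _u ∈ B, σ * n := by simp
    _ ≤ ∑ u ∈ B, (#{v | Z u v} : ℝ) := sum_le_sum fun u hu => (mem_filter.1 hu).2.le
    _ ≤ ∑ u, (#{v | Z u v} : ℝ) := sum_le_univ_sum_of_nonneg fun _ => Nat.cast_nonneg _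
    _ = #{z : V × V | Z z.1 z.2} := by rw [hsum]; push_cast; rfl
    _ ≤ σ * n * (σ * n) := hZ.trans_eq (by ring)

theorem exists_small_forall_notMem_two_le_sum_add [Fintype V] [Nonempty ι] {Z : V → V → Prop}
    {σ : ℝ} (hσ : 0 < σ) (hZ : #{z : V × V | Z z.1 z.2} ≤ σ ^ 2 * (Fintype.card V : ℝ) ^ 2)
    {W : ι → V → ℕ} (hW : ∀ u v, ¬ Z u v → ∃ i, 2 ≤ W i u + W i v) :
    ∃ (j : ι) (B : Finset V), #B ≤ σ * Fintype.card V ∧ ∀ v ∉ B, 2 ≤ ∑ i, W i v + W j v := by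
  by_cases hlarge : ∀ u, #{v | Z u v} ≤ σ * Fintype.card V → 2 ≤ ∑ i, W i u
  · refine ⟨Classical.arbitrary ι, _, card_filter_lt_card_filter_le hσ hZ, fun v hv => ?_⟩
    simp only [mem_filter, mem_univ, true_and, not_lt] at hv
    exact (hlarge v hv).trans (Nat.le_add_right _ _)
  push Not at hlarge
  obtain ⟨u, hu, hsum⟩ := hlarge
  -- all weights at `u` vanish, except perhaps one that equals `1`
  obtain ⟨j, hj⟩ : ∃ j, ∀ i, W i u ≤ if i = j then 1 else 0 := by
    by_cases hzero : ∀ i, W i u = 0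
    · exact ⟨Classical.arbitrary ι, fun i => by simp [hzero]⟩
    push Not at hzero
    obtain ⟨j, hj⟩ := hzero
    refine ⟨j, fun i => ?_⟩
    have hrest := add_sum_erase univ (W · u) (mem_univ j)
    split_ifs with hij
    · subst hij; omega
    · have := single_le_sum (f := (W · u)) (fun _ _ => Nat.zero_le _)
        (mem_erase.2 ⟨hij, mem_univ i⟩)
      omega
  refine ⟨j, univ.filter (Z u), hu, fun v hv => ?_⟩
  obtain ⟨i, hi⟩ := hW u v (by simpa using hv)
  have hiv := single_le_sum (f := fun i => W i v) (fun _ _ => Nat.zero_le _) (mem_univ i)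
  grind

theorem exists_two_mul_le_mul_sum_cover [Fintype V] [Nonempty ι] {Z : V → V → Prop}
    {σ : ℝ} (hσ : 0 < σ) (hZ : #{z : V × V | Z z.1 z.2} ≤ σ ^ 2 * (Fintype.card V : ℝ) ^ 2)
    {W : ι → V → ℕ} (hW : ∀ u v, ¬ Z u v → ∃ i, 2 ≤ W i u + W i v) :
    ∃ i, 2 * (1 - σ) * Fintype.card V ≤ (Fintype.card ι + 1) * (∑ v, W i v : ℕ) := by
  obtain ⟨j, B, hB, hW⟩ := exists_small_forall_notMem_two_le_sum_add hσ hZ hW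
  obtain ⟨i, -, hi⟩ := exists_max_image univ (fun i => ∑ v, W i v) univ_nonempty
  have hcompl : (#B : ℝ) + #Bᶜ = Fintype.card V := mod_cast card_add_card_compl B
  have hsum : 2 * #Bᶜ ≤ (Fintype.card ι + 1) * ∑ v, W i v := calc
    2 * #Bᶜ = ∑ _v ∈ Bᶜ, 2 := by simp [mul_comm]
    _ ≤ ∑ v ∈ Bᶜ, (∑ i, W i v + W j v) := sum_le_sum fun v hv => hW v (mem_compl.1 hv)
    _ ≤ ∑ v, (∑ i, W i v + W j v) := sum_le_univ_sum_of_nonneg fun _ => Nat.zero_le _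
    _ = ∑ i, ∑ v, W i v + ∑ v, W j v := by rw [sum_add_distrib, sum_comm]
    _ ≤ ∑ _i : ι, ∑ v, W i v + ∑ v, W i v :=
      add_le_add (sum_le_sum fun k _ => hi k (mem_univ k)) (hi j (mem_univ j))
    _ = (Fintype.card ι + 1) * ∑ v, W i v := by simp [add_mul]
  rify at hsum
  exact ⟨i, by push_cast; linarith⟩

theorem exists_matching_of_few_uncovered [Fintype V] [Nonempty ι] {R : ι → V → V → Prop}
    (hR : ∀ i u v, R i u v → R i v u) {Z : V → V → Prop} (hZR : ∀ u v, ¬ Z u v → ∃ i, R i u v)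
    {σ : ℝ} (hσ : 0 < σ) (hZ : #{z : V × V | Z z.1 z.2} ≤ σ ^ 2 * (Fintype.card V : ℝ) ^ 2) :
    ∃ (i : ι) (M : Finset (V × V)), Set.InjOn Prod.fst (M : Set (V × V)) ∧
      Set.InjOn Prod.snd (M : Set (V × V)) ∧ (∀ e ∈ M, R i e.1 e.2) ∧
      2 * (1 - σ) * Fintype.card V ≤ (Fintype.card ι + 1) * #M := by
  choose M hfst hsnd hMR W hW hWM using fun i => exists_matching_and_cover (hR i)
  obtain ⟨i, hi⟩ := exists_two_mul_le_mul_sum_cover hσ hZ fun u v huv =>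
    (hZR u v huv).imp fun i => hW i u v
  refine ⟨i, M i, hfst i, hsnd i, hMR i, hi.trans ?_⟩
  gcongr
  exact hWM i

end Cover

/-! ### Regular partitions -/

/-- The pair `(A, B)` is `δ`-full in `H` if `H` has an edge between any two disjoint subsets of `A`
and `B` that contain at least a `δ`-fraction of `A` and `B`. This replaces the regular pairs of
positive density in Szemerédi's regularity lemma. -/
def IsFullPair (H : SimpleGraph V) (δ : ℝ) (A B : Finset V) : Prop :=
  NoBipartiteHole H (δ * #A) (δ * #B) A B

/-- No edge of `H` joins `A` to `B`; for `A = B` this says that `A` is independent. -/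
def EdgeFree (H : SimpleGraph V) (A B : Finset V) : Prop :=
  ∀ x ∈ A, ∀ y ∈ B, ¬ H.Adj x y

theorem EdgeFree.mono {H : SimpleGraph V} {A A' B B' : Finset V} (h : EdgeFree H A B)
    (hA : A' ⊆ A) (hB : B' ⊆ B) : EdgeFree H A' B' :=
  fun x hx y hy => h x (hA hx) y (hB hy)

theorem exists_edgeFree_of_not_isFullPair {H : SimpleGraph V} {δ : ℝ} {A B : Finset V}
    (h : ¬ IsFullPair H δ A B) :
    ∃ X ⊆ A, ∃ Y ⊆ B, δ * #A ≤ #X ∧ δ * #B ≤ #Y ∧ EdgeFree H X Y := by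
  rw [IsFullPair, NoBipartiteHole] at h
  push Not at h
  obtain ⟨X, hX, Y, hY, -, hXcard, hYcard, hXY⟩ := h
  exact ⟨X, hX, Y, hY, hXcard, hYcard, hXY⟩

section Partition

variable [Fintype V]

theorem part_atomise_subset {F : Finset (Finset V)} {S : Finset V} (hS : S ∈ F) {u : V}
    (hu : u ∈ S) : (Finpartition.atomise univ F).part u ⊆ S := by
  rw [← Finpartition.biUnion_filter_atomise hS (subset_univ S), mem_biUnion] at hu
  obtain ⟨t, ht, hut⟩ := hu
  rw [mem_filter] at ht
  rw [Finpartition.part_eq_of_mem _ ht.1 hut]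
  exact ht.2.1

variable {ι : Type*} [Fintype ι]

/-- The triples `(i, u, v)` such that `H i` has no edge between the parts of `u` and of `v`. Their
number is the energy that is increased by refining `P`. -/
noncomputable def edgeFreeTriples (H : ι → SimpleGraph V) (P : Finpartition (univ : Finset V)) :
    Finset (ι × V × V) :=
  {z | EdgeFree (H z.1) (P.part z.2.1) (P.part z.2.2)}

/-- The triples `(i, u, v)` such that the parts of `u` and of `v` have an edge of `H i` between
them without forming a `δ`-full pair. -/
noncomputable def irregularTriples (H : ι → SimpleGraph V) (δ : ℝ)
    (P : Finpartition (univ : Finset V)) : Finset (ι × V × V) :=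
  {z | ¬ IsFullPair (H z.1) δ (P.part z.2.1) (P.part z.2.2) ∧
    ¬ EdgeFree (H z.1) (P.part z.2.1) (P.part z.2.2)}

variable (H : ι → SimpleGraph V) {δ : ℝ}

theorem sq_mul_card_filter_irregularTriples_le (hδ : 0 ≤ δ) {P Q : Finpartition (univ : Finset V)}
    {i : ι} {A B : Finset V}
    (hQ : A ∈ P.parts → B ∈ P.parts → ¬ IsFullPair (H i) δ A B →
      ∃ X ⊆ A, ∃ Y ⊆ B, δ * #A ≤ #X ∧ δ * #B ≤ #Y ∧ ∀ x ∈ X, ∀ y ∈ Y,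
        EdgeFree (H i) (Q.part x) (Q.part y)) :
    δ ^ 2 * #{z ∈ irregularTriples H δ P | (z.1, P.part z.2.1, P.part z.2.2) = (i, A, B)} ≤
      #{z ∈ edgeFreeTriples H Q \ edgeFreeTriples H P |
        (z.1, P.part z.2.1, P.part z.2.2) = (i, A, B)} := by
  rcases eq_empty_or_nonempty
      {z ∈ irregularTriples H δ P | (z.1, P.part z.2.1, P.part z.2.2) = (i, A, B)}
    with hempty | ⟨z, hz⟩
  · rw [hempty]; simp
  have hmem (u : V) : u ∈ P.part u := P.mem_part_self.2 (mem_univ u)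
  have hirr : {z ∈ irregularTriples H δ P | (z.1, P.part z.2.1, P.part z.2.2) = (i, A, B)} ⊆
      {i} ×ˢ A ×ˢ B := by
    rintro ⟨j, u, v⟩ h
    simp only [mem_filter, Prod.mk.injEq] at h
    obtain ⟨-, rfl, rfl, rfl⟩ := h
    simp [hmem]
  obtain ⟨i', u, v⟩ := z
  simp only [irregularTriples, mem_filter, mem_univ, true_and, Prod.mk.injEq] at hz
  obtain ⟨⟨hnotfull, hnotfree⟩, rfl, rfl, rfl⟩ := hz
  obtain ⟨X, hXA, Y, hYB, hX, hY, hfree⟩ :=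
    hQ (P.part_mem.2 (mem_univ u)) (P.part_mem.2 (mem_univ v)) hnotfull
  have hnew : {i'} ×ˢ X ×ˢ Y ⊆ {z ∈ edgeFreeTriples H Q \ edgeFreeTriples H P |
      (z.1, P.part z.2.1, P.part z.2.2) = (i', P.part u, P.part v)} := by
    rintro ⟨j, x, y⟩ h
    simp only [mem_product, mem_singleton] at h
    obtain ⟨rfl, hx, hy⟩ := h
    have hxu := P.part_eq_of_mem (P.part_mem.2 (mem_univ u)) (hXA hx)
    have hyv := P.part_eq_of_mem (P.part_mem.2 (mem_univ v)) (hYB hy)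
    simpa [edgeFreeTriples, hxu, hyv, hnotfree] using hfree x hx y hy
  calc δ ^ 2 * _ ≤ δ ^ 2 * (#(P.part u) * #(P.part v) : ℕ) := by
        gcongr; simpa using card_le_card hirr
    _ = (δ * #(P.part u)) * (δ * #(P.part v)) := by push_cast; ring
    _ ≤ #X * #Y := by gcongr
    _ ≤ _ := mod_cast by simpa using card_le_card hnew

theorem sq_mul_card_irregularTriples_add_card_edgeFreeTriples_le
    (hδ : 0 ≤ δ) {P Q : Finpartition (univ : Finset V)} (hQP : ∀ u, Q.part u ⊆ P.part u)
    (hQ : ∀ i, ∀ A ∈ P.parts, ∀ B ∈ P.parts, ¬ IsFullPair (H i) δ A B →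
      ∃ X ⊆ A, ∃ Y ⊆ B, δ * #A ≤ #X ∧ δ * #B ≤ #Y ∧ ∀ x ∈ X, ∀ y ∈ Y,
        EdgeFree (H i) (Q.part x) (Q.part y)) :
    δ ^ 2 * #(irregularTriples H δ P) + #(edgeFreeTriples H P) ≤ #(edgeFreeTriples H Q) := by
  set cell : ι × V × V → ι × Finset V × Finset V := fun z => (z.1, P.part z.2.1, P.part z.2.2)
  have hsub : edgeFreeTriples H P ⊆ edgeFreeTriples H Q := fun z hz => by
    simp only [edgeFreeTriples, mem_filter, mem_univ, true_and] at hz ⊢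
    exact hz.mono (hQP _) (hQP _)
  have hnew : δ ^ 2 * #(irregularTriples H δ P) ≤
      #(edgeFreeTriples H Q \ edgeFreeTriples H P) := by
    rw [card_eq_sum_card_fiberwise (f := cell) (t := univ) (by simp),
      card_eq_sum_card_fiberwise (f := cell) (t := univ) (by simp)]
    push_cast
    rw [mul_sum]
    exact sum_le_sum fun c _ =>
      sq_mul_card_filter_irregularTriples_le H hδ fun hA hB => hQ c.1 _ hA _ hB
  rw [← card_sdiff_add_card_eq_card hsub]
  push_cast
  linarith

theorem exists_finpartition_card_edgeFreeTriples_add_le (hδ : 0 ≤ δ)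
    (P : Finpartition (univ : Finset V)) :
    ∃ Q : Finpartition (univ : Finset V),
      #Q.parts ≤ 2 ^ (#P.parts + 2 * (Fintype.card ι * #P.parts ^ 2)) ∧
      δ ^ 2 * #(irregularTriples H δ P) + #(edgeFreeTriples H P) ≤ #(edgeFreeTriples H Q) := by
  have hcut (c : ι × Finset V × Finset V) : ∃ X Y : Finset V,
      ¬ IsFullPair (H c.1) δ c.2.1 c.2.2 →
        X ⊆ c.2.1 ∧ Y ⊆ c.2.2 ∧ δ * #c.2.1 ≤ #X ∧ δ * #c.2.2 ≤ #Y ∧ EdgeFree (H c.1) X Y := by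
    by_cases hfull : IsFullPair (H c.1) δ c.2.1 c.2.2
    · exact ⟨∅, ∅, (absurd hfull ·)⟩
    · obtain ⟨X, hX, Y, hY, h⟩ := exists_edgeFree_of_not_isFullPair hfull
      exact ⟨X, Y, fun _ => ⟨hX, hY, h⟩⟩
  choose X Y hXY using hcut
  set C := (univ : Finset ι) ×ˢ P.parts ×ˢ P.parts
  set F := P.parts ∪ (C.image X ∪ C.image Y)
  have hFcard : #F ≤ #P.parts + 2 * (Fintype.card ι * #P.parts ^ 2) := by
    have hC : #C = Fintype.card ι * #P.parts ^ 2 := by simp [C, card_product, sq]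
    have hX : #(C.image X) ≤ #C := card_image_le
    have hY : #(C.image Y) ≤ #C := card_image_le
    linarith [card_union_le P.parts (C.image X ∪ C.image Y),
      card_union_le (C.image X) (C.image Y)]
  refine ⟨Finpartition.atomise univ F, Finpartition.card_atomise_le.trans
    (Nat.pow_le_pow_right two_pos hFcard),
    sq_mul_card_irregularTriples_add_card_edgeFreeTriples_le H hδ (fun u => ?_) ?_⟩
  · exact part_atomise_subset (mem_union_left _ (P.part_mem.2 (mem_univ u)))
      (P.mem_part_self.2 (mem_univ u))
  · intro i A hA B hB hfull
    have hc : (i, A, B) ∈ C := by simp [C, hA, hB]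
    obtain ⟨hXA, hYB, hXcard, hYcard, hfree⟩ := hXY (i, A, B) hfull
    refine ⟨X (i, A, B), hXA, Y (i, A, B), hYB, hXcard, hYcard, fun x hx y hy => ?_⟩
    refine hfree.mono (part_atomise_subset ?_ hx) (part_atomise_subset ?_ hy)
    · exact mem_union_right _ (mem_union_left _ (mem_image_of_mem X hc))
    · exact mem_union_right _ (mem_union_right _ (mem_image_of_mem Y hc))

end Partition

theorem exists_card_parts_le_or_mul_le_card_edgeFreeTriples (ι : Type*) [Fintype ι] {δ η : ℝ}
    (hδ : 0 ≤ δ) (m : ℕ) :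
    ∃ K : ℕ, ∀ {V : Type*} [Fintype V] (H : ι → SimpleGraph V),
      ∃ P : Finpartition (univ : Finset V), #P.parts ≤ K ∧
        (#(irregularTriples H δ P) ≤ η * (Fintype.card V : ℝ) ^ 2 ∨
          m * (δ ^ 2 * (η * (Fintype.card V : ℝ) ^ 2)) ≤ #(edgeFreeTriples H P)) := by
  induction m with
  | zero =>
    refine ⟨1, fun H => ⟨⊤, ?_, Or.inr (by simp)⟩⟩
    exact (card_le_card (Finpartition.parts_top_subset _)).trans (card_singleton _).le
  | succ m ih =>
    obtain ⟨K, hK⟩ := ih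
    refine ⟨K + 2 ^ (K + 2 * (Fintype.card ι * K ^ 2)), fun {V} _ H => ?_⟩
    obtain ⟨P, hPK, hP⟩ := hK H
    by_cases hirr : #(irregularTriples H δ P) ≤ η * (Fintype.card V : ℝ) ^ 2
    · exact ⟨P, hPK.trans (Nat.le_add_right _ _), Or.inl hirr⟩
    obtain ⟨Q, hQK, hQ⟩ := exists_finpartition_card_edgeFreeTriples_add_le H hδ P
    refine ⟨Q, hQK.trans (le_add_left ?_), Or.inr ?_⟩
    · gcongr; exact one_le_two
    · have hfree := hP.resolve_left hirr
      have := mul_le_mul_of_nonneg_left (not_le.1 hirr).le (sq_nonneg δ)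
      push_cast
      linarith

theorem exists_finpartition_card_irregularTriples_le (ι : Type*) [Fintype ι] {δ η : ℝ}
    (hδ : 0 < δ) (hη : 0 < η) :
    ∃ K : ℕ, ∀ {V : Type*} [Fintype V] (H : ι → SimpleGraph V),
      ∃ P : Finpartition (univ : Finset V), #P.parts ≤ K ∧
        #(irregularTriples H δ P) ≤ η * (Fintype.card V : ℝ) ^ 2 := by
  obtain ⟨m, hm⟩ := exists_nat_gt (Fintype.card ι / (δ ^ 2 * η))
  rw [div_lt_iff₀ (by positivity)] at hm
  obtain ⟨K, hK⟩ := exists_card_parts_le_or_mul_le_card_edgeFreeTriples ι (η := η) hδ.le m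
  refine ⟨K, fun {V} _ H => ?_⟩
  obtain ⟨P, hPK, hirr | hfree⟩ := hK H
  · exact ⟨P, hPK, hirr⟩
  have hcard (T : Finset (ι × V × V)) : (#T : ℝ) ≤ Fintype.card ι * (Fintype.card V : ℝ) ^ 2 := by
    have := card_le_univ T
    rw [Fintype.card_prod, Fintype.card_prod, ← sq] at this
    exact_mod_cast this
  have hempty : (Fintype.card V : ℝ) ^ 2 = 0 := by
    have := hfree.trans (hcard _)
    nlinarith [sq_nonneg (Fintype.card V : ℝ)]
  refine ⟨P, hPK, (hcard _).trans ?_⟩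
  simp [hempty]

section Uncovered

variable [Fintype V] {ι : Type*} {G : SimpleGraph V} {H : ι → SimpleGraph V} {g : ℕ}

theorem exists_not_edgeFree (hG : NoBipartiteHole G g g univ univ)
    (hGH : ∀ x y, G.Adj x y → ∃ i, (H i).Adj x y) {A B : Finset V} (hA : 2 * g ≤ #A)
    (hB : 2 * g ≤ #B) : ∃ i, ¬ EdgeFree (H i) A B := by
  obtain ⟨X, hXA, hX⟩ := exists_subset_card_eq (show g ≤ #A by omega)
  obtain ⟨Y, hYB, hY⟩ := exists_subset_card_eq
    (show g ≤ #(B \ X) by have := le_card_sdiff X B; omega)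
  obtain ⟨x, hx, y, hy, hxy⟩ := hG X (subset_univ X) Y (subset_univ Y)
    (disjoint_sdiff.mono_right hYB) (by simp [hX]) (by simp [hY])
  obtain ⟨i, hi⟩ := hGH x y hxy
  exact ⟨i, fun hfree => hfree x (hXA hx) y (sdiff_subset (hYB hy)) hi⟩

/-- The parts of `u` and `v` form a `δ`-full pair in none of the graphs `H i`. -/
def Uncovered (H : ι → SimpleGraph V) (δ : ℝ) (P : Finpartition (univ : Finset V)) (u v : V) :
    Prop :=
  ∀ i, ¬ IsFullPair (H i) δ (P.part u) (P.part v)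

theorem card_filter_card_part_lt_le (P : Finpartition (univ : Finset V)) (m : ℕ) :
    #{u | #(P.part u) < m} ≤ m * #P.parts := by
  refine card_le_mul_card_image_of_maps_to (f := P.part) (fun u _ => P.part_mem.2 (mem_univ u)) m
    fun A _ => ?_
  rcases eq_empty_or_nonempty {u ∈ {u | #(P.part u) < m} | P.part u = A} with hempty | ⟨u, hu⟩
  · simp [hempty]
  simp only [mem_filter, mem_univ, true_and] at hu
  refine (card_le_card fun v hv => ?_).trans (hu.2 ▸ hu.1.le)
  rw [mem_filter] at hv
  exact hv.2 ▸ P.mem_part_self.2 (mem_univ v)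

theorem card_uncovered_le [Fintype ι] (hG : NoBipartiteHole G g g univ univ)
    (hGH : ∀ x y, G.Adj x y → ∃ i, (H i).Adj x y) (δ : ℝ) (P : Finpartition (univ : Finset V)) :
    #{z : V × V | Uncovered H δ P z.1 z.2} ≤
      #(irregularTriples H δ P) + 4 * g * #P.parts * Fintype.card V := by
  set S : Finset V := {u | #(P.part u) < 2 * g}
  have hS : #S ≤ 2 * g * #P.parts := card_filter_card_part_lt_le P (2 * g)
  have hsub : ({z : V × V | Uncovered H δ P z.1 z.2} : Finset (V × V)) ⊆
      (irregularTriples H δ P).image Prod.snd ∪ (S ×ˢ univ ∪ univ ×ˢ S) := by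
    rintro ⟨u, v⟩ huv
    simp only [mem_filter, mem_univ, true_and] at huv
    by_cases hsmall : u ∈ S ∨ v ∈ S
    · exact mem_union_right _ (by simpa using hsmall)
    simp only [S, mem_filter, mem_univ, true_and, not_or, not_lt] at hsmall
    obtain ⟨i, hi⟩ := exists_not_edgeFree hG hGH hsmall.1 hsmall.2
    exact mem_union_left _ (mem_image.2 ⟨(i, u, v), by simp [irregularTriples, huv i, hi], rfl⟩)
  calc _ ≤ #((irregularTriples H δ P).image Prod.snd) + (#(S ×ˢ univ) + #(univ ×ˢ S)) :=
        (card_le_card hsub).trans ((card_union_le _ _).trans (by gcongr; exact card_union_le _ _))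
    _ ≤ #(irregularTriples H δ P) +
        (2 * g * #P.parts * Fintype.card V + Fintype.card V * (2 * g * #P.parts)) := by
      rw [card_product, card_product, card_univ]
      gcongr
      exact card_image_le
    _ = _ := by ring

end Uncovered

/-! ### From a matching of full pairs to a path -/

section Matching

theorem exists_nat_rounding {κ : Type*} [Fintype κ] (y : κ → ℝ) :
    ∃ q : κ → ℕ, (∀ p, 0 < q p → q p + 1 / 2 ≤ y p) ∧
      ∑ p, y p ≤ (∑ p, q p : ℕ) + 3 / 2 * Fintype.card κ := by
  refine ⟨fun p => ⌊y p - 1 / 2⌋₊, fun p hp => ?_, ?_⟩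
  · linarith [Nat.floor_le (Nat.floor_pos.1 hp |>.trans' zero_le_one)]
  · have : ∑ p, y p ≤ ∑ p, ((⌊y p - 1 / 2⌋₊ : ℝ) + 3 / 2) :=
      sum_le_sum fun p _ => by linarith [Nat.lt_floor_add_one (y p - 1 / 2)]
    rw [sum_add_distrib, sum_const, card_univ, nsmul_eq_mul] at this
    push_cast
    linarith

theorem sum_add_half_le_mul_card_of_injOn {E κ : Type*} [DecidableEq κ] {M : Finset E}
    {cell : E → κ} {T : Finset κ} (hT : T.Nonempty) {c : ℝ} (hc : 0 ≤ c) {q : κ → ℕ}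
    (hq : ∀ p ∈ T, q p + 1 / 2 ≤ c * #{e ∈ M | cell e = p}) {φ : E → V}
    (hφ : Set.InjOn φ (M : Set E)) {a : Finset V} (ha : ∀ e ∈ M, cell e ∈ T → φ e ∈ a) :
    (∑ p ∈ T, q p : ℕ) + 1 / 2 ≤ c * #a := by
  have hcard : ∑ p ∈ T, #{e ∈ M | cell e = p} ≤ #a := by
    refine (sum_card_fiberwise_eq_card_filter M T cell).trans_le ?_
    refine card_le_card_of_injOn φ (fun e he => ?_) (hφ.mono (coe_subset.2 (filter_subset _ _)))
    obtain ⟨heM, heT⟩ := mem_filter.1 (mem_coe.1 he)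
    exact ha e heM heT
  have hsum : (∑ p ∈ T, q p : ℕ) + #T * (1 / 2 : ℝ) ≤ c * (∑ p ∈ T, #{e ∈ M | cell e = p} : ℕ) := by
    push_cast
    rw [mul_sum, ← nsmul_eq_mul, ← sum_const, ← sum_add_distrib]
    exact sum_le_sum hq
  have hTpos : (1 : ℝ) ≤ #T := mod_cast hT.card_pos
  have : c * (∑ p ∈ T, #{e ∈ M | cell e = p} : ℕ) ≤ c * #a := by gcongr
  linarith

theorem exists_subset_card_le_two_mul_add_one (a : Finset V) :
    ∃ A ⊆ a, #a ≤ 2 * #A + 1 ∧ #a ≤ 2 * #(a \ A) + 1 := by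
  obtain ⟨A, hA, hcard⟩ := exists_subset_card_eq (Nat.div_le_self #a 2)
  have := card_sdiff_of_subset hA
  exact ⟨A, hA, by omega, by omega⟩

variable {α : Type*} [Fintype α] {C : α → Finset V} {f : V → α} {M : Finset (V × V)}

theorem exists_matching_allocation (hf : ∀ u, u ∈ C (f u))
    (hfst : Set.InjOn Prod.fst (M : Set (V × V))) (hsnd : Set.InjOn Prod.snd (M : Set (V × V)))
    {c : ℝ} (hc : 0 ≤ c) :
    ∃ (q : α × α → ℕ) (F : Finset (α × α)), (∀ p ∈ F, ∃ e ∈ M, (f e.1, f e.2) = p) ∧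
      (∀ p ∈ F, (∑ p' ∈ F with p'.1 = p.1, q p' : ℕ) + 1 / 2 ≤ c * #(C p.1)) ∧
      (∀ p ∈ F, (∑ p' ∈ F with p'.2 = p.2, q p' : ℕ) + 1 / 2 ≤ c * #(C p.2)) ∧
      c * #M ≤ (∑ p ∈ F, q p : ℕ) + 3 / 2 * (Fintype.card α : ℝ) ^ 2 := by
  set cell : V × V → α × α := fun e => (f e.1, f e.2)
  obtain ⟨q, hq, hqsum⟩ := exists_nat_rounding fun p => c * (#{e ∈ M | cell e = p} : ℝ)
  set F : Finset (α × α) := {p | 0 < q p} with hF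
  replace hq (p) (hp : p ∈ F) : q p + 1 / 2 ≤ c * #{e ∈ M | cell e = p} :=
    hq p (mem_filter.1 hp).2
  refine ⟨q, F, fun p hp => ?_, fun p hp => ?_, fun p hp => ?_, ?_⟩
  · have hne : #{e ∈ M | cell e = p} ≠ 0 := fun h => by
      have := hq p hp
      rw [h] at this
      linarith [(q p).cast_nonneg (α := ℝ)]
    simpa [card_eq_zero, filter_eq_empty_iff] using hne
  · have hT : p ∈ F.filter (·.1 = p.1) := mem_filter.2 ⟨hp, rfl⟩
    refine sum_add_half_le_mul_card_of_injOn ⟨p, hT⟩ hc (cell := cell)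
      (fun p' hp' => hq p' (mem_of_mem_filter p' hp')) hfst fun e _ he => ?_
    exact (mem_filter.1 he).2 ▸ hf e.1
  · have hT : p ∈ F.filter (·.2 = p.2) := mem_filter.2 ⟨hp, rfl⟩
    refine sum_add_half_le_mul_card_of_injOn ⟨p, hT⟩ hc (cell := cell)
      (fun p' hp' => hq p' (mem_of_mem_filter p' hp')) hsnd fun e _ he => ?_
    exact (mem_filter.1 he).2 ▸ hf e.2
  · have hFsum : ∑ p ∈ F, q p = ∑ p, q p :=
      sum_subset (subset_univ F) fun p _ hp => by simpa [hF] using hp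
    have hMsum : ∑ p, (#{e ∈ M | cell e = p} : ℝ) = #M :=
      mod_cast (card_eq_sum_card_fiberwise fun e _ => mem_coe.2 (mem_univ (cell e))).symm
    rw [hFsum, ← hMsum, mul_sum, sq]
    simpa using hqsum

variable [Fintype V] {G H : SimpleGraph V} {g : ℕ} {δ : ℝ}

/- Every class is halved, one half serving the matching edges that start in the class and the other
half those that end in it; a pair of classes with `x` matching edges gets a path on about
`2 * (1 / 2 - 2 * δ) * x` vertices. -/
theorem exists_isChain_of_matching (hG : NoBipartiteHole G g g univ univ) (hHG : H ≤ G)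
    (hδ : δ ≤ 1 / 4) (hC : Pairwise (Disjoint on C)) (hf : ∀ u, u ∈ C (f u))
    (hfst : Set.InjOn Prod.fst (M : Set (V × V)))
    (hsnd : Set.InjOn Prod.snd (M : Set (V × V)))
    (hM : ∀ e ∈ M, IsFullPair H δ (C (f e.1)) (C (f e.2))) :
    ∃ Q : List V, Q.IsChain G.Adj ∧ Q.Nodup ∧ defect H Q ≤ Fintype.card α ^ 2 ∧
      (1 - 4 * δ) * #M ≤ Q.length + (2 * g + 3) * (Fintype.card α : ℝ) ^ 2 := by
  choose A hA hAcard hBcard using fun a => exists_subset_card_le_two_mul_add_one (C a)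
  obtain ⟨q, F, hFM, hrow, hcol, hsum⟩ :=
    exists_matching_allocation hf hfst hsnd (c := 1 / 2 - 2 * δ) (by linarith)
  have hFcard : #F ≤ Fintype.card α ^ 2 := (card_le_univ F).trans_eq (by simp [sq])
  have hAB (a b : α) : Disjoint (A a) (C b \ A b) := by
    rcases eq_or_ne a b with rfl | hab
    · exact disjoint_sdiff
    · exact (hC hab).mono (hA a) sdiff_subset
  obtain ⟨Q, hQ, hnodup, hdefect, hlen, -⟩ := exists_isChain_of_pairs hG hHG
    (A := A) (B := fun b => C b \ A b)
    (s := fun a => δ * #(C a)) (t := fun b => δ * #(C b))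
    (fun a b hab => (hC hab).mono (hA a) (hA b))
    (fun a b hab => (hC hab).mono sdiff_subset sdiff_subset) hAB q F
    (fun p hp => by
      obtain ⟨e, he, rfl⟩ := hFM p hp
      exact (hM e he).mono le_rfl le_rfl (hA _) sdiff_subset)
    (fun p hp => by have := hAcard p.1; rify at this; linarith [hrow p hp])
    (fun p hp => by have := hBcard p.2; rify at this; linarith [hcol p hp])
  refine ⟨Q, hQ, hnodup, hdefect.trans hFcard, ?_⟩
  have hlen' : 2 * (∑ p ∈ F, q p : ℕ) ≤ (Q.length : ℝ) + 2 * g * #F := mod_cast hlen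
  have : 2 * (g : ℝ) * #F ≤ 2 * g * (Fintype.card α : ℝ) ^ 2 := by gcongr; exact_mod_cast hFcard
  linarith

end Matching

section Constants

variable {ι : Type*} [Fintype ι] [Nonempty ι]

theorem exists_isChain_of_finpartition [Fintype V] {G : SimpleGraph V} {H : ι → SimpleGraph V}
    (hHG : ∀ i, H i ≤ G) (hGH : ∀ x y, G.Adj x y → ∃ i, (H i).Adj x y) {g : ℕ}
    (hG : NoBipartiteHole G g g univ univ) {δ : ℝ} (hδ : 0 < δ) (hδ' : δ ≤ 1 / 4)
    {P : Finpartition (univ : Finset V)}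
    (hirr : #(irregularTriples H δ P) ≤ δ ^ 2 / 2 * (Fintype.card V : ℝ) ^ 2)
    (hg : 4 * g * #P.parts ≤ δ ^ 2 / 2 * Fintype.card V) :
    ∃ (i : ι) (Q : List V), Q.IsChain G.Adj ∧ Q.Nodup ∧ defect (H i) Q ≤ #P.parts ^ 2 ∧
      2 * (1 - 5 * δ) * Fintype.card V ≤
        (Fintype.card ι + 1) * (Q.length + (2 * g + 3) * (#P.parts : ℝ) ^ 2) := by
  have huncovered : #{z : V × V | Uncovered H δ P z.1 z.2} ≤ δ ^ 2 * (Fintype.card V : ℝ) ^ 2 := by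
    have hcard := card_uncovered_le hG hGH δ P
    rify at hcard
    nlinarith [mul_le_mul_of_nonneg_right hg ((Fintype.card V).cast_nonneg (α := ℝ))]
  obtain ⟨i, M, hfst, hsnd, hM, hMcard⟩ := exists_matching_of_few_uncovered
    (R := fun i u v => IsFullPair (H i) δ (P.part u) (P.part v)) (fun i u v h => h.symm)
    (Z := Uncovered H δ P) (fun u v h => not_forall_not.1 h) hδ huncovered
  obtain ⟨Q, hQ, hnodup, hdefect, hlen⟩ := exists_isChain_of_matching hG (hHG i) hδ'
    (C := fun a : P.parts => a) (f := fun u => ⟨P.part u, P.part_mem.2 (mem_univ u)⟩)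
    (fun a b hab => P.disjoint a.2 b.2 (Subtype.coe_injective.ne hab))
    (fun u => P.mem_part (mem_univ u)) hfst hsnd hM
  rw [Fintype.card_coe] at hdefect hlen
  refine ⟨i, Q, hQ, hnodup, hdefect, ?_⟩
  calc 2 * (1 - 5 * δ) * Fintype.card V
      ≤ (1 - 4 * δ) * (2 * (1 - δ) * Fintype.card V) := by
        linarith [show 0 ≤ 8 * δ ^ 2 * Fintype.card V by positivity]
    _ ≤ (1 - 4 * δ) * ((Fintype.card ι + 1) * #M) := by gcongr; linarith
    _ = (Fintype.card ι + 1) * ((1 - 4 * δ) * #M) := by ring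
    _ ≤ _ := by gcongr

theorem exists_isChain_of_card_parts_le [Fintype V] {G : SimpleGraph V} {H : ι → SimpleGraph V}
    (hHG : ∀ i, H i ≤ G) (hGH : ∀ x y, G.Adj x y → ∃ i, (H i).Adj x y) {γ : ℝ}
    (hG : NoBipartiteHole G (γ * Fintype.card V) (γ * Fintype.card V) univ univ)
    (hγ : 1 ≤ γ * Fintype.card V) {δ : ℝ} (hδ : 0 < δ) (hδ' : δ ≤ 1 / 4) {K : ℕ}
    (hγK : 16 * (K + 1) ^ 2 * γ = δ ^ 2) {P : Finpartition (univ : Finset V)}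
    (hPK : #P.parts ≤ K) (hirr : #(irregularTriples H δ P) ≤ δ ^ 2 / 2 * (Fintype.card V : ℝ) ^ 2) :
    ∃ (i : ι) (Q : List V), Q.IsChain G.Adj ∧ Q.Nodup ∧ defect (H i) Q ≤ K ^ 2 ∧
      2 * (1 - 5 * δ) * Fintype.card V ≤
        (Fintype.card ι + 1) * (Q.length - 1 + δ * Fintype.card V) := by
  have hg : (⌈γ * Fintype.card V⌉₊ : ℝ) ≤ 2 * (γ * Fintype.card V) :=
    (Nat.ceil_lt_add_one (zero_le_one.trans hγ)).le.trans (by linarith)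
  have hK1 : (1 : ℝ) ≤ (K + 1) := by linarith [K.cast_nonneg (α := ℝ)]
  have hPK' : (#P.parts : ℝ) ≤ K + 1 := mod_cast hPK.trans K.le_succ
  obtain ⟨i, Q, hQ, hnodup, hdefect, hlen⟩ := exists_isChain_of_finpartition hHG hGH
    (hG.mono (Nat.le_ceil _) (Nat.le_ceil _) subset_rfl subset_rfl) hδ hδ' hirr <| calc
      4 * (⌈γ * Fintype.card V⌉₊ : ℝ) * #P.parts
          ≤ 4 * (2 * (γ * Fintype.card V)) * (K + 1) ^ 2 := by
        gcongr
        exact hPK'.trans (le_self_pow₀ hK1 two_ne_zero)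
      _ = δ ^ 2 / 2 * Fintype.card V := by rw [← hγK]; ring
  refine ⟨i, Q, hQ, hnodup, hdefect.trans (Nat.pow_le_pow_left hPK 2), hlen.trans ?_⟩
  have hloss : (2 * ⌈γ * Fintype.card V⌉₊ + 3) * (#P.parts : ℝ) ^ 2 + 1 ≤ δ * Fintype.card V := calc
    _ ≤ (2 * (2 * (γ * Fintype.card V)) + 3 * (γ * Fintype.card V)) * (K + 1) ^ 2 +
        γ * Fintype.card V * (K + 1) ^ 2 := by
      gcongr
      · linarith
      · exact one_le_mul_of_one_le_of_one_le hγ (one_le_pow₀ hK1)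
    _ = δ ^ 2 / 2 * Fintype.card V := by rw [← hγK]; ring
    _ ≤ δ * Fintype.card V := by gcongr; nlinarith
  exact mul_le_mul_of_nonneg_left (by linarith) (by positivity)

theorem exists_isChain_defect_le (ι : Type*) [Fintype ι] [Nonempty ι] {ε : ℝ} (hε : 0 < ε) :
    ∃ γ : ℝ, 0 < γ ∧ γ < 1 ∧ ∃ K N : ℕ, ∀ {V : Type*} [Fintype V], N ≤ Fintype.card V →
      ∀ G : SimpleGraph V,
      NoBipartiteHole G (γ * Fintype.card V) (γ * Fintype.card V) univ univ →
      ∀ H : ι → SimpleGraph V, (∀ i, H i ≤ G) → (∀ x y, G.Adj x y → ∃ i, (H i).Adj x y) →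
      ∃ (i : ι) (Q : List V), Q.IsChain G.Adj ∧ Q.Nodup ∧ defect (H i) Q ≤ K ∧
        (2 / (Fintype.card ι + 1 : ℝ) - ε) * Fintype.card V + 1 ≤ Q.length := by
  obtain ⟨δ, hδ, hδε⟩ := exists_between (show 0 < min (ε / 6) (1 / 4) by positivity)
  obtain ⟨hδε, hδ4⟩ := lt_min_iff.1 hδε
  obtain ⟨K, hK⟩ := exists_finpartition_card_irregularTriples_le ι hδ (half_pos (sq_pos_of_pos hδ))
  obtain ⟨γ, hγ, hγK⟩ : ∃ γ > 0, 16 * (K + 1) ^ 2 * γ = δ ^ 2 :=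
    ⟨δ ^ 2 / (16 * (K + 1) ^ 2), by positivity, by field_simp⟩
  obtain ⟨N, hN⟩ := exists_nat_ge (1 / γ)
  refine ⟨γ, hγ, ?_, K ^ 2, N, fun {V} _ hNV G hG H hHG hGH => ?_⟩
  · nlinarith [K.cast_nonneg (α := ℝ)]
  have hγn : 1 ≤ γ * Fintype.card V := by
    rw [div_le_iff₀' hγ] at hN
    exact hN.trans (by gcongr)
  obtain ⟨P, hPK, hirr⟩ := hK H
  obtain ⟨i, Q, hQ, hnodup, hdefect, hlen⟩ :=
    exists_isChain_of_card_parts_le hHG hGH hG hγn hδ hδ4.le hγK hPK hirr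
  refine ⟨i, Q, hQ, hnodup, hdefect, ?_⟩
  have hι : (1 : ℝ) ≤ Fintype.card ι := mod_cast Fintype.card_pos
  rw [← div_le_iff₀' (by linarith)] at hlen
  have hfrac : 2 / (Fintype.card ι + 1 : ℝ) ≤ 1 := (div_le_one₀ (by linarith)).2 (by linarith)
  calc (2 / (Fintype.card ι + 1 : ℝ) - ε) * Fintype.card V + 1
      ≤ (2 / (Fintype.card ι + 1 : ℝ) - 6 * δ) * Fintype.card V + 1 := by gcongr; linarith
    _ ≤ 2 / (Fintype.card ι + 1 : ℝ) * ((1 - 5 * δ) * Fintype.card V) - δ * Fintype.card V + 1 := by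
      linarith [mul_le_mul_of_nonneg_right hfrac (show 0 ≤ 5 * δ * Fintype.card V by positivity)]
    _ = 2 * (1 - 5 * δ) * Fintype.card V / (Fintype.card ι + 1) - δ * Fintype.card V + 1 := by ring
    _ ≤ Q.length := by linarith

end Constants

theorem exists_isPath_of_isChain [Nonempty V] {G : SimpleGraph V} {l : List V}
    (hl : l.IsChain G.Adj) (hnodup : l.Nodup) :
    ∃ (u v : V) (w : G.Walk u v), w.IsPath ∧ l.length ≤ w.length + 1 ∧
      ∀ H : SimpleGraph V, w.edges.countP (· ∉ H.edgeSet) = defect H l := by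
  rcases eq_or_ne l [] with rfl | hne
  · exact ⟨Classical.arbitrary V, _, .nil, by simp [defect]⟩
  refine ⟨_, _, .ofSupport l hne hl, ?_, ?_, fun H => ?_⟩
  · rwa [SimpleGraph.Walk.isPath_def, SimpleGraph.Walk.support_ofSupport]
  · rw [SimpleGraph.Walk.length_ofSupport]; omega
  · rw [SimpleGraph.Walk.edges_eq_zipWith_support, SimpleGraph.Walk.support_ofSupport, defect]

end

theorem IsPseudorandom.noBipartiteHole {V : Type*} [Fintype V] {G : SimpleGraph V} {γ p : ℝ}
    (hG : IsPseudorandom G γ p) (hp : 0 < p) (hγ : γ < 1) :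
    NoBipartiteHole G (γ * Fintype.card V) (γ * Fintype.card V) .univ .univ := by
  intro X _ Y _ hXY hX hY
  by_contra! hfree
  have hedges : edgesBetween G X Y = 0 := by
    rw [edgesBetween, Set.ncard_eq_zero, Set.eq_empty_iff_forall_notMem]
    rintro ⟨x, y⟩ ⟨hx, hy, hxy⟩
    exact hfree x hx y hy hxy
  have hdensity := hG X Y (Finset.disjoint_coe.2 hXY) (by simpa using hX) (by simpa using hY)
  rw [hedges, Nat.cast_zero, zero_div, zero_sub, abs_neg, abs_of_pos hp] at hdensity
  nlinarith

theorem long_almost_monochromatic_path_pseudorandom_general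
    (ι : Type*) [Fintype ι] [Nonempty ι] [DecidableEq ι] (ε : ℝ) (hε : 0 < ε) :
    ∃ γ : ℝ, 0 < γ ∧ γ < 1 ∧ ∃ K N : ℕ,
      ∀ {V : Type*} [Fintype V], N ≤ Fintype.card V →
      ∀ G : SimpleGraph V,
        NoBipartiteHole G (γ * Fintype.card V) (γ * Fintype.card V) .univ .univ →
      ∀ c : Sym2 V → ι, ∃ i : ι,
        ∃ (u v : V) (w : G.Walk u v), w.IsPath ∧
          (2 / (Fintype.card ι + 1 : ℝ) - ε) * Fintype.card V ≤ (w.length : ℝ) ∧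
          (w.edges.filter (fun e => c e ≠ i)).length ≤ K := by
  obtain ⟨γ, hγ, hγ1, K, N, h⟩ := exists_isChain_defect_le ι hε
  refine ⟨γ, hγ, hγ1, K, N, fun {V} _ hN G hG c => ?_⟩
  obtain ⟨i, Q, hQ, hnodup, hdefect, hlen⟩ := h hN G hG (fun i => G.deleteEdges {e | c e ≠ i})
    (fun i => G.deleteEdges_le _) fun x y hxy => ⟨c s(x, y), by simpa using hxy⟩
  have : Nonempty V := by
    by_contra hV
    rw [not_nonempty_iff] at hV
    norm_num [Subsingleton.elim Q []] at hlen
  obtain ⟨u, v, w, hw, hwlen, hwdefect⟩ := exists_isPath_of_isChain hQ hnodup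
  refine ⟨i, u, v, w, hw, ?_, ?_⟩
  · have : (Q.length : ℝ) ≤ w.length + 1 := mod_cast hwlen
    linarith
  · rw [← hwdefect] at hdefect
    rw [← List.countP_eq_length_filter]
    refine (List.countP_mono_left fun e he hce => ?_).trans hdefect
    have heG := w.edges_subset_edgeSet he
    simpa [SimpleGraph.edgeSet_deleteEdges, heG] using hce

/-- **Theorem (long almost monochromatic paths in pseudorandom graphs).**
For every `r ≥ 2` and `ε > 0` there are `γ > 0`, `K` and `N` such that: for every
`p ∈ (0,1]`, every `(γ,p)`-pseudorandom graph `G` on `n ≥ N` vertices and every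
`r`-colouring of the edges of `G`, there are a colour `i` and a path of length at
least `(2/(r+1) − ε)·n` all but at most `K` of whose edges have colour `i`. -/
theorem long_almost_monochromatic_path_pseudorandom
    (r : ℕ) (hr : 2 ≤ r) (ε : ℝ) (hε : 0 < ε) :
    ∃ γ : ℝ, 0 < γ ∧ ∃ K N : ℕ,
      ∀ (p : ℝ), 0 < p → p ≤ 1 →
      ∀ (n : ℕ), N ≤ n →
      ∀ (G : SimpleGraph (Fin n)), IsPseudorandom G γ p →
      ∀ c : Sym2 (Fin n) → Fin r, ∃ i : Fin r,
        ∃ (u v : Fin n) (w : G.Walk u v), w.IsPath ∧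
          (2 / (r + 1 : ℝ) - ε) * n ≤ (w.length : ℝ) ∧
          (w.edges.filter (fun e => c e ≠ i)).length ≤ K := by
  have : NeZero r := ⟨by omega⟩
  obtain ⟨γ, hγ, hγ1, K, N, h⟩ := long_almost_monochromatic_path_pseudorandom_general (Fin r) ε hε
  refine ⟨γ, hγ, K, N, fun p hp _ n hn G hG c => ?_⟩
  simpa using h (by simpa using hn) G (hG.noBipartiteHole hp hγ1) c
end

section
/- Let n, k ≥ 1 be integers, and let F be a bipartite graph with sides X and Y of size n each. Suppose that for every pair of sets X' ⊆ X and Y' ⊆ Y with |X'| = |Y'| = k there is an edge of F between X' and Y'. Then F contains a path of length at least 2n − 4k. -/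
/-!
Discard the edges inside `X` and inside `Y`, and run depth-first search on `X ∪ Y`, keeping the
vertices split into the finished ones `S`, the current path `p` and the unseen ones `T`. A finished
vertex never has an unseen neighbour. Each step moves one vertex from `T` to `p` or from `p` to `S`,
so `|S| - |T|` grows by one at a time, from `-2n` to `2n`, and at some moment `|S| = |T|`. At that
moment `|p|` is even, so `p` meets both sides equally often, and counting gives
`|S ∩ X| = |T ∩ Y|` and `|S ∩ Y| = |T ∩ X|`. As no edge joins `S` to `T`, all four sets have fewer
than `k` elements, and everything else lies on the path `p`.
-/

section DepthFirstSearch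

variable {V : Type*} {G : SimpleGraph V}

/-- A state of depth-first search on the vertices `U` of `G`: `S` holds the finished vertices, `p`
the current path with its newest vertex first, and `T` the unseen vertices. The three parts are
added up as multisets, so that for a duplicate-free `U` the equation `add_eq` also says that they
are disjoint and duplicate-free. -/
structure IsDFSState (G : SimpleGraph V) (U S : Multiset V) (p : List V) (T : Multiset V) :
    Prop where
  add_eq : S + p + T = U
  isChain : p.IsChain G.Adj
  not_adj : ∀ s ∈ S, ∀ t ∈ T, ¬ G.Adj s t

namespace IsDFSState

variable {U S T : Multiset V} {p : List V} {t u : V}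

theorem initial (G : SimpleGraph V) (U : Multiset V) : IsDFSState G U 0 [] U where
  add_eq := by simp
  isChain := .nil
  not_adj := by simp

theorem push (h : IsDFSState G U S p (t ::ₘ T)) (hchain : (t :: p).IsChain G.Adj) :
    IsDFSState G U S (t :: p) T where
  add_eq := by
    rw [← h.add_eq, ← Multiset.cons_coe, Multiset.add_cons, Multiset.cons_add, Multiset.add_cons]
  isChain := hchain
  not_adj s hs v hv := h.not_adj s hs v (Multiset.mem_cons_of_mem hv)

theorem pop (h : IsDFSState G U S (u :: p) T) (hu : ∀ v ∈ T, ¬ G.Adj u v) :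
    IsDFSState G U (u ::ₘ S) p T where
  add_eq := by rw [← h.add_eq, ← Multiset.cons_coe, Multiset.cons_add, Multiset.add_cons]
  isChain := h.isChain.of_cons
  not_adj := Multiset.forall_mem_cons.mpr ⟨hu, h.not_adj⟩

theorem card_add_length_add_card (h : IsDFSState G U S p T) :
    S.card + p.length + T.card = U.card := by
  simp [← h.add_eq]

theorem mem_of_mem_left (h : IsDFSState G U S p T) (hu : u ∈ S) : u ∈ U := by
  simp [← h.add_eq, hu]

theorem mem_of_mem_right (h : IsDFSState G U S p T) (hu : u ∈ T) : u ∈ U := by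
  simp [← h.add_eq, hu]

theorem exists_next (h : IsDFSState G U S p T) (hne : p ≠ [] ∨ T ≠ 0) :
    ∃ S' p' T', IsDFSState G U S' p' T' ∧
      2 * S'.card + p'.length = 2 * S.card + p.length + 1 := by
  have exists_push : ∀ t ∈ T, (t :: p).IsChain G.Adj → ∃ S' p' T', IsDFSState G U S' p' T' ∧
      2 * S'.card + p'.length = 2 * S.card + p.length + 1 := by
    intro t ht hchain
    obtain ⟨T', rfl⟩ := Multiset.exists_cons_of_mem ht
    exact ⟨S, t :: p, T', h.push hchain, by rw [List.length_cons, add_assoc]⟩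
  cases p with
  | nil =>
    obtain ⟨t, ht⟩ := Multiset.exists_mem_of_ne_zero (hne.resolve_left (not_not.mpr rfl))
    exact exists_push t ht (.singleton t)
  | cons u q =>
    by_cases hu : ∃ t ∈ T, G.Adj u t
    · obtain ⟨t, ht, hut⟩ := hu
      exact exists_push t ht (h.isChain.cons_cons hut.symm)
    · push Not at hu
      exact ⟨u ::ₘ S, q, T, h.pop hu, by rw [Multiset.card_cons, List.length_cons]; ring⟩

theorem exists_two_mul_card_add_length_eq (G : SimpleGraph V) (U : Multiset V) {m : ℕ}
    (hm : m ≤ 2 * U.card) : ∃ S p T, IsDFSState G U S p T ∧ 2 * S.card + p.length = m := by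
  induction m with
  | zero => exact ⟨0, [], U, initial G U, rfl⟩
  | succ m ih =>
    obtain ⟨S, p, T, h, rfl⟩ := ih (by omega)
    refine h.exists_next ?_
    by_contra! hdone
    obtain ⟨rfl, rfl⟩ := hdone
    have := h.card_add_length_add_card
    simp only [List.length_nil, Multiset.card_zero] at this hm
    omega

theorem exists_card_eq (G : SimpleGraph V) (U : Multiset V) :
    ∃ S p T, IsDFSState G U S p T ∧ S.card = T.card := by
  obtain ⟨S, p, T, h, hcard⟩ := exists_two_mul_card_add_length_eq G U (m := U.card) (by omega)
  exact ⟨S, p, T, h, by have := h.card_add_length_add_card; omega⟩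

theorem exists_finset_card_eq (G : SimpleGraph V) (U : Finset V) :
    ∃ (S : Finset V) (p : List V) (T : Finset V),
      IsDFSState G U.val S.val p T.val ∧ p.Nodup ∧ S.card = T.card := by
  obtain ⟨S, p, T, h, hcard⟩ := exists_card_eq G U.val
  have hnodup := U.nodup
  rw [← h.add_eq, Multiset.nodup_add, Multiset.nodup_add] at hnodup
  obtain ⟨⟨hS, hp, -⟩, hT, -⟩ := hnodup
  exact ⟨⟨S, hS⟩, p, ⟨T, hT⟩, h, hp, hcard⟩

end IsDFSState

theorem exists_isPath_length_le_of_isChain [Nonempty V] {p : List V} (hchain : p.IsChain G.Adj)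
    (hnodup : p.Nodup) :
    ∃ (u v : V) (w : G.Walk u v), w.IsPath ∧ p.length ≤ w.length + 1 := by
  rcases eq_or_ne p [] with rfl | hne
  · exact ⟨Classical.arbitrary V, _, .nil, .nil, Nat.zero_le _⟩
  · refine ⟨_, _, .ofSupport p hne hchain, ?_, ?_⟩
    · rwa [SimpleGraph.Walk.isPath_def, SimpleGraph.Walk.support_ofSupport]
    · rw [SimpleGraph.Walk.length_ofSupport]; omega

variable {X Y : Finset V} {k : ℕ}

theorem two_mul_countP_mem_eq_length_of_isBipartiteWith [DecidableEq V]
    (hG : G.IsBipartiteWith X Y) {p : List V} (hp : p.IsChain G.Adj) (heven : Even p.length) :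
    2 * p.countP (· ∈ X) = p.length := by
  have mem_ne_mem : ∀ u v, G.Adj u v → decide (u ∈ X) ≠ decide (v ∈ X) := by
    intro u v huv
    have := hG.mem_of_adj huv
    have := Finset.disjoint_left.mp (Finset.disjoint_coe.mp hG.disjoint)
    grind
  have hchain : (p.map (decide <| · ∈ X)).IsChain (· ≠ ·) :=
    (List.isChain_map _).mpr (hp.imp mem_ne_mem)
  have hcount := hchain.two_mul_count_bool_of_even (by rwa [List.length_map]) true
  rw [List.length_map, List.count, List.countP_map] at hcount
  simpa [Function.comp_def] using hcount

theorem IsDFSState.card_add_length_add_card_of_disjoint [DecidableEq V] (hdisj : Disjoint X Y)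
    {S T : Multiset V} {p : List V} (h : IsDFSState G (X ∪ Y).val S p T) :
    S.card + p.length + T.card = X.card + Y.card := by
  rw [← Finset.card_union_of_disjoint hdisj]
  exact h.card_add_length_add_card

theorem IsDFSState.card_inter_add_card_inter_eq_card [DecidableEq V] (hG : G.IsBipartiteWith X Y)
    (hXY : X.card = Y.card) {S T : Finset V} {p : List V}
    (h : IsDFSState G (X ∪ Y).val S.val p T.val) (hST : S.card = T.card) :
    (S ∩ X).card + (T ∩ X).card = S.card := by
  have hcard : S.card + p.length + T.card = X.card + Y.card :=
    h.card_add_length_add_card_of_disjoint (Finset.disjoint_coe.mp hG.disjoint)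
  have countP_mem_eq (A : Finset V) : A.val.countP (· ∈ X) = (A ∩ X).card := by
    rw [Multiset.countP_eq_card_filter, ← Finset.filter_mem_eq_inter]
    rfl
  have hcount : (S ∩ X).card + p.countP (· ∈ X) + (T ∩ X).card = X.card := by
    have := congrArg (Multiset.countP (· ∈ X)) h.add_eq
    rwa [Multiset.countP_add, Multiset.countP_add, Multiset.coe_countP, countP_mem_eq,
      countP_mem_eq, countP_mem_eq, Finset.union_inter_cancel_left] at this
  have heven : Even p.length := by grind
  have hp := two_mul_countP_mem_eq_length_of_isBipartiteWith hG h.isChain heven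
  omega

theorem card_lt_or_card_lt_of_forall_not_adj
    (hedge : ∀ X' ⊆ X, ∀ Y' ⊆ Y, X'.card = k → Y'.card = k → ∃ x ∈ X', ∃ y ∈ Y', G.Adj x y)
    {A B : Finset V} (hA : A ⊆ X) (hB : B ⊆ Y) (hAB : ∀ a ∈ A, ∀ b ∈ B, ¬ G.Adj a b) :
    A.card < k ∨ B.card < k := by
  by_contra! hle
  obtain ⟨X', hX', hX'card⟩ := Finset.exists_subset_card_eq hle.1
  obtain ⟨Y', hY', hY'card⟩ := Finset.exists_subset_card_eq hle.2
  obtain ⟨x, hx, y, hy, hxy⟩ := hedge X' (hX'.trans hA) Y' (hY'.trans hB) hX'card hY'card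
  exact hAB x (hX' hx) y (hY' hy) hxy

theorem exists_isChain_nodup_le_length_of_isBipartiteWith (hG : G.IsBipartiteWith X Y)
    (hXY : X.card = Y.card)
    (hedge : ∀ X' ⊆ X, ∀ Y' ⊆ Y, X'.card = k → Y'.card = k → ∃ x ∈ X', ∃ y ∈ Y', G.Adj x y) :
    ∃ p : List V, p.IsChain G.Adj ∧ p.Nodup ∧ 2 * X.card + 4 ≤ p.length + 4 * k := by
  classical
  obtain ⟨S, p, T, h, hnodup, hST⟩ := IsDFSState.exists_finset_card_eq G (X ∪ Y)
  have hinter : (S ∩ X).card + (T ∩ X).card = S.card :=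
    h.card_inter_add_card_inter_eq_card hG hXY hST
  have hS_sdiff : S \ X ⊆ Y := sdiff_le_iff.mpr fun v hv ↦ h.mem_of_mem_left hv
  have hT_sdiff : T \ X ⊆ Y := sdiff_le_iff.mpr fun v hv ↦ h.mem_of_mem_right hv
  have hS_card : (S ∩ X).card + (S \ X).card = S.card := Finset.card_inter_add_card_sdiff S X
  have hT_card : (T ∩ X).card + (T \ X).card = T.card := Finset.card_inter_add_card_sdiff T X
  have hSX : (S ∩ X).card < k ∨ (T \ X).card < k :=
    card_lt_or_card_lt_of_forall_not_adj hedge Finset.inter_subset_right hT_sdiff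
      fun s hs t ht ↦ h.not_adj s (Finset.mem_inter.mp hs).1 t (Finset.mem_sdiff.mp ht).1
  have hTX : (T ∩ X).card < k ∨ (S \ X).card < k :=
    card_lt_or_card_lt_of_forall_not_adj hedge Finset.inter_subset_right hS_sdiff
      fun t ht s hs hts ↦
        h.not_adj s (Finset.mem_sdiff.mp hs).1 t (Finset.mem_inter.mp ht).1 hts.symm
  have hlength : S.card + p.length + T.card = X.card + Y.card :=
    h.card_add_length_add_card_of_disjoint (Finset.disjoint_coe.mp hG.disjoint)
  exact ⟨p, h.isChain, hnodup, by omega⟩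

end DepthFirstSearch

theorem bipartite_long_path_general {V : Type*} [Nonempty V] (F : SimpleGraph V)
    (X Y : Finset V) (k : ℕ) (hXY : X.card = Y.card) (hdisj : Disjoint X Y)
    (hedge : ∀ X' ⊆ X, ∀ Y' ⊆ Y, X'.card = k → Y'.card = k →
      ∃ x ∈ X', ∃ y ∈ Y', F.Adj x y) :
    ∃ (u v : V) (w : F.Walk u v), w.IsPath ∧ 2 * X.card + 3 ≤ w.length + 4 * k := by
  have hbip : (F.between X Y).IsBipartiteWith X Y :=
    SimpleGraph.between_isBipartiteWith (Finset.disjoint_coe.mpr hdisj)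
  have hedge_between : ∀ X' ⊆ X, ∀ Y' ⊆ Y, X'.card = k → Y'.card = k →
      ∃ x ∈ X', ∃ y ∈ Y', (F.between X Y).Adj x y := by
    intro X' hX' Y' hY' hX'card hY'card
    obtain ⟨x, hx, y, hy, hxy⟩ := hedge X' hX' Y' hY' hX'card hY'card
    exact ⟨x, hx, y, hy, hxy, .inl ⟨hX' hx, hY' hy⟩⟩
  obtain ⟨p, hchain, hnodup, hlength⟩ :=
    exists_isChain_nodup_le_length_of_isBipartiteWith hbip hXY hedge_between
  obtain ⟨u, v, w, hw, hpw⟩ := exists_isPath_length_le_of_isChain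
    (hchain.imp fun _ _ hadj ↦ SimpleGraph.between_le hadj) hnodup
  exact ⟨u, v, w, hw, by omega⟩

/-- **Lemma (long paths via DFS, Ben-Eliezer–Krivelevich–Sudakov).**
Let `n, k ≥ 1` and let `F` be a bipartite graph with sides `X, Y` of size `n` each,
such that there is an edge between every pair of sets `X' ⊆ X`, `Y' ⊆ Y` with
`|X'| = |Y'| = k`. Then `F` contains a path of length at least `2n − 4k`. -/
theorem bipartite_long_path
    {V : Type*} [Fintype V] [DecidableEq V] (F : SimpleGraph V)
    (X Y : Finset V) (n k : ℕ) (hn : 1 ≤ n) (hk : 1 ≤ k)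
    (hX : X.card = n) (hY : Y.card = n)
    (hdisj : Disjoint X Y) (hpart : X ∪ Y = Finset.univ)
    (hbip : ∀ u v : V, F.Adj u v → (u ∈ X ∧ v ∈ Y) ∨ (u ∈ Y ∧ v ∈ X))
    (hedge : ∀ X' ⊆ X, ∀ Y' ⊆ Y, X'.card = k → Y'.card = k →
      ∃ x ∈ X', ∃ y ∈ Y', F.Adj x y) :
    ∃ (u v : V) (w : F.Walk u v), w.IsPath ∧ (2 * n - 4 * k : ℤ) ≤ (w.length : ℤ) := by
  have : Nonempty V := (Finset.card_pos.mp (hX ▸ hn)).to_type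
  obtain ⟨u, v, w, hw, hlength⟩ :=
    bipartite_long_path_general F X Y k (hX.trans hY.symm) hdisj hedge
  exact ⟨u, v, w, hw, by omega⟩
end
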